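/- The Euler characteristic of the real Grassmannian Gr(k,n) equals the binomial coefficient C(⌊n/2⌋, ⌊k/2⌋) when (k,n) is of the form (2j,2m), (2j,2m+1), or (2j+1,2m+1), and equals 0 when (k,n) = (2j+1, 2m). -/

import Mathlib

open CategoryTheory Polynomial

/-- The singular chain complex of a topological space `X` with coefficients in `R`,
i.e. the alternating face map complex of the free simplicial `R`-module on the
singular simplicial set of `X`. -/
noncomputable def singularChainComplex (R : Type) [CommRing R] (X : TopCat) :
    ChainComplex (ModuleCat R) ℕ :=
  (AlgebraicTopology.alternatingFaceMapComplex (ModuleCat R)).obj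
    (TopCat.toSSet.obj X ⋙ ModuleCat.free R)

/-- Singular cohomology of `X` with coefficients in `R`, the homology of the dual
cochain complex `Hom(C_•(X; R), R)`. -/
noncomputable def singularCohomology (R : Type) [CommRing R] (X : TopCat) (n : ℕ) :
    ModuleCat R :=
  (((((linearYoneda R (ModuleCat R)).obj (ModuleCat.of R R)).mapHomologicalComplex _).obj
    (singularChainComplex R X).op)).homology n


/-- The setoid on linearly independent `k`-frames in `ℝⁿ` identifying frames with the
same span. -/
def grassSetoid (k n : ℕ) :
    Setoid {A : Fin k → (Fin n → ℝ) // LinearIndependent ℝ A} :=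
  Setoid.ker fun A => Submodule.span ℝ (Set.range (A.1))

/-- The real Grassmann manifold `Gr(k, n)` of `k`-dimensional linear subspaces of `ℝⁿ`,
topologized as the quotient of the space of linearly independent `k`-frames. -/
def Grassmannian (k n : ℕ) : Type := _root_.Quotient (grassSetoid k n)

noncomputable instance (k n : ℕ) : TopologicalSpace (Grassmannian k n) :=
  inferInstanceAs (TopologicalSpace (_root_.Quotient _))

/-- The `q`-integer `[r]_q = 1 + q + ⋯ + q^(r-1)` as a polynomial in `q`. -/
noncomputable def qInt (r : ℕ) : Polynomial ℤ := ∑ i ∈ Finset.range r, X ^ i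

/-- The `q`-factorial `[r]_q! = [r]_q [r-1]_q ⋯ [1]_q`. -/
noncomputable def qFact : ℕ → Polynomial ℤ
  | 0 => 1
  | r + 1 => qInt (r + 1) * qFact r

section OrderedChains

variable {E : Type}

/-- The boundary on the augmented complex of ordered chains on `E`: the module in degree `n` is
free on `n`-tuples. -/
noncomputable def orderedBoundary (E : Type) (n : ℕ) :
    ((Fin (n + 1) → E) →₀ ℚ) →ₗ[ℚ] ((Fin n → E) →₀ ℚ) :=
  ∑ i : Fin (n + 1), (-1 : ℚ) ^ (i : ℕ) • Finsupp.lmapDomain ℚ ℚ (fun v => v ∘ i.succAbove)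

/-- Prepending a vertex to all tuples of an ordered chain. -/
noncomputable def orderedCone (b : E) (n : ℕ) :
    ((Fin n → E) →₀ ℚ) →ₗ[ℚ] ((Fin (n + 1) → E) →₀ ℚ) :=
  Finsupp.lmapDomain ℚ ℚ (Fin.cons (α := fun _ => E) b)

lemma orderedBoundary_single (n : ℕ) (v : Fin (n + 1) → E) :
    orderedBoundary E n (Finsupp.single v 1) =
      ∑ i : Fin (n + 1), (-1 : ℚ) ^ (i : ℕ) • Finsupp.single (v ∘ i.succAbove) 1 := by
  simp [orderedBoundary]

lemma orderedCone_single (b : E) (n : ℕ) (v : Fin n → E) :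
    orderedCone b n (Finsupp.single v 1) = Finsupp.single (Fin.cons b v : Fin (n + 1) → E) 1 := by
  simp [orderedCone]

lemma orderedBoundary_orderedCone_zero (b : E) (x : (Fin 0 → E) →₀ ℚ) :
    orderedBoundary E 0 (orderedCone b 0 x) = x := by
  suffices h : orderedBoundary E 0 ∘ₗ orderedCone b 0 = LinearMap.id from LinearMap.congr_fun h x
  refine Finsupp.lhom_ext' fun v => LinearMap.ext_ring ?_
  simp only [LinearMap.comp_apply, Finsupp.lsingle_apply, orderedCone_single,
    orderedBoundary_single, LinearMap.id_apply]
  simp [Subsingleton.elim _ v]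

lemma orderedBoundary_orderedCone_succ (b : E) (n : ℕ) (x : (Fin (n + 1) → E) →₀ ℚ) :
    orderedBoundary E (n + 1) (orderedCone b (n + 1) x) =
      x - orderedCone b n (orderedBoundary E n x) := by
  suffices h : orderedBoundary E (n + 1) ∘ₗ orderedCone b (n + 1) =
      LinearMap.id - orderedCone b n ∘ₗ orderedBoundary E n from LinearMap.congr_fun h x
  refine Finsupp.lhom_ext' fun v => LinearMap.ext_ring ?_
  simp only [LinearMap.comp_apply, Finsupp.lsingle_apply, orderedCone_single,
    orderedBoundary_single, LinearMap.id_apply, LinearMap.sub_apply, map_sum, map_smul]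
  rw [Fin.sum_univ_succ, sub_eq_add_neg, ← Finset.sum_neg_distrib]
  congr 1
  · simp only [Fin.val_zero, pow_zero, one_smul]
    congr 1
  · refine Finset.sum_congr rfl fun i _ => ?_
    rw [Fin.val_succ, pow_succ, mul_neg_one, neg_smul]
    congr 3
    funext j
    refine Fin.cases ?_ (fun j => ?_) j <;> simp

lemma orderedBoundary_comp (n : ℕ) (x : (Fin (n + 2) → E) →₀ ℚ) :
    orderedBoundary E n (orderedBoundary E (n + 1) x) = 0 := by
  induction n with
  | zero =>
    suffices h : orderedBoundary E 0 ∘ₗ orderedBoundary E 1 = 0 from LinearMap.congr_fun h x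
    refine Finsupp.lhom_ext' fun v => LinearMap.ext_ring ?_
    rw [← Fin.cons_self_tail v]
    simp only [LinearMap.comp_apply, Finsupp.lsingle_apply]
    rw [← orderedCone_single, orderedBoundary_orderedCone_succ, map_sub,
      orderedBoundary_orderedCone_zero]
    simp
  | succ n ih =>
    suffices h : orderedBoundary E (n + 1) ∘ₗ orderedBoundary E (n + 2) = 0 from
      LinearMap.congr_fun h x
    refine Finsupp.lhom_ext' fun v => LinearMap.ext_ring ?_
    rw [← Fin.cons_self_tail v]
    simp only [LinearMap.comp_apply, Finsupp.lsingle_apply]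
    rw [← orderedCone_single, orderedBoundary_orderedCone_succ, map_sub,
      orderedBoundary_orderedCone_succ, ih]
    simp

variable (β : ∀ n, (Fin (n + 1) → E) → E)

/-- Subdivision of ordered chains, with `β` choosing the centre of each simplex. -/
noncomputable def orderedSd : ∀ n, ((Fin n → E) →₀ ℚ) →ₗ[ℚ] ((Fin n → E) →₀ ℚ)
  | 0 => LinearMap.id
  | n + 1 => Finsupp.linearCombination ℚ fun v =>
      orderedCone (β n v) n (orderedSd n (orderedBoundary E n (Finsupp.single v 1)))

/-- The chain homotopy between the identity and the subdivision of ordered chains. -/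
noncomputable def orderedSdHomotopy : ∀ n, ((Fin n → E) →₀ ℚ) →ₗ[ℚ] ((Fin (n + 1) → E) →₀ ℚ)
  | 0 => 0
  | n + 1 => Finsupp.linearCombination ℚ fun v =>
      orderedCone (β n v) (n + 1) (Finsupp.single v 1 -
        orderedSdHomotopy n (orderedBoundary E n (Finsupp.single v 1)))

lemma orderedSd_succ_single (n : ℕ) (v : Fin (n + 1) → E) :
    orderedSd β (n + 1) (Finsupp.single v 1) =
      orderedCone (β n v) n (orderedSd β n (orderedBoundary E n (Finsupp.single v 1))) := by
  simp [orderedSd]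

lemma orderedSdHomotopy_succ_single (n : ℕ) (v : Fin (n + 1) → E) :
    orderedSdHomotopy β (n + 1) (Finsupp.single v 1) =
      orderedCone (β n v) (n + 1) (Finsupp.single v 1 -
        orderedSdHomotopy β n (orderedBoundary E n (Finsupp.single v 1))) := by
  simp [orderedSdHomotopy]

lemma orderedBoundary_orderedSd (n : ℕ) (x : (Fin (n + 1) → E) →₀ ℚ) :
    orderedBoundary E n (orderedSd β (n + 1) x) = orderedSd β n (orderedBoundary E n x) := by
  suffices h : orderedBoundary E n ∘ₗ orderedSd β (n + 1) = orderedSd β n ∘ₗ orderedBoundary E n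
    from LinearMap.congr_fun h x
  induction n with
  | zero =>
    refine Finsupp.lhom_ext' fun v => LinearMap.ext_ring ?_
    simp only [LinearMap.comp_apply, Finsupp.lsingle_apply, orderedSd_succ_single]
    rw [orderedBoundary_orderedCone_zero]
  | succ n ih =>
    refine Finsupp.lhom_ext' fun v => LinearMap.ext_ring ?_
    simp only [LinearMap.comp_apply, Finsupp.lsingle_apply]
    rw [orderedSd_succ_single, orderedBoundary_orderedCone_succ]
    have := LinearMap.congr_fun (ih 0) (orderedBoundary E (n + 1) (Finsupp.single v 1))
    simp only [LinearMap.comp_apply] at this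
    rw [this, orderedBoundary_comp]
    simp

lemma orderedBoundary_orderedSdHomotopy (n : ℕ) (x : (Fin (n + 1) → E) →₀ ℚ) :
    orderedBoundary E (n + 1) (orderedSdHomotopy β (n + 1) x) =
      x - orderedSd β (n + 1) x - orderedSdHomotopy β n (orderedBoundary E n x) := by
  suffices h : orderedBoundary E (n + 1) ∘ₗ orderedSdHomotopy β (n + 1) =
      LinearMap.id - orderedSd β (n + 1) - orderedSdHomotopy β n ∘ₗ orderedBoundary E n
    from LinearMap.congr_fun h x
  induction n with
  | zero =>
    refine Finsupp.lhom_ext' fun v => LinearMap.ext_ring ?_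
    simp only [LinearMap.comp_apply, Finsupp.lsingle_apply, orderedSdHomotopy_succ_single,
      LinearMap.sub_apply, LinearMap.id_apply, orderedSd_succ_single]
    rw [orderedBoundary_orderedCone_succ]
    simp [orderedSdHomotopy, orderedSd]
  | succ n ih =>
    refine Finsupp.lhom_ext' fun v => LinearMap.ext_ring ?_
    have := LinearMap.congr_fun (ih 0) (orderedBoundary E (n + 1) (Finsupp.single v 1))
    simp only [LinearMap.comp_apply, LinearMap.sub_apply, LinearMap.id_apply,
      orderedBoundary_comp, map_zero, sub_zero] at this
    simp only [LinearMap.comp_apply, Finsupp.lsingle_apply, orderedSdHomotopy_succ_single,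
      LinearMap.sub_apply, LinearMap.id_apply, orderedSd_succ_single]
    rw [orderedBoundary_orderedCone_succ, map_sub, this]
    simp only [map_sub]
    abel

section Naturality

variable {E' : Type} {β} {β' : ∀ n, (Fin (n + 1) → E') → E'} {f : E → E'}

lemma orderedBoundary_mapDomain (f : E → E') (n : ℕ) (x : (Fin (n + 1) → E) →₀ ℚ) :
    orderedBoundary E' n (x.mapDomain (f ∘ ·)) = (orderedBoundary E n x).mapDomain (f ∘ ·) := by
  suffices h : orderedBoundary E' n ∘ₗ Finsupp.lmapDomain ℚ ℚ (f ∘ ·) =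
      Finsupp.lmapDomain ℚ ℚ (f ∘ ·) ∘ₗ orderedBoundary E n from LinearMap.congr_fun h x
  refine Finsupp.lhom_ext' fun v => LinearMap.ext_ring ?_
  simp only [LinearMap.comp_apply, Finsupp.lsingle_apply, orderedBoundary_single, map_sum,
    map_smul, Finsupp.lmapDomain_apply, Finsupp.mapDomain_single]
  rfl

lemma orderedCone_mapDomain (f : E → E') (b : E) (n : ℕ) (x : (Fin n → E) →₀ ℚ) :
    (orderedCone b n x).mapDomain (f ∘ ·) = orderedCone (f b) n (x.mapDomain (f ∘ ·)) := by
  simp only [orderedCone, Finsupp.lmapDomain_apply, ← Finsupp.mapDomain_comp]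
  congr 1
  funext v
  exact Fin.comp_cons f b v

lemma orderedSd_mapDomain (hf : ∀ n v, f (β n v) = β' n (f ∘ v)) (n : ℕ) (x : (Fin n → E) →₀ ℚ) :
    orderedSd β' n (x.mapDomain (f ∘ ·)) = (orderedSd β n x).mapDomain (f ∘ ·) := by
  suffices h : orderedSd β' n ∘ₗ Finsupp.lmapDomain ℚ ℚ (f ∘ ·) =
      Finsupp.lmapDomain ℚ ℚ (f ∘ ·) ∘ₗ orderedSd β n from LinearMap.congr_fun h x
  induction n with
  | zero => rfl
  | succ n ih =>
    refine Finsupp.lhom_ext' fun v => LinearMap.ext_ring ?_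
    have := LinearMap.congr_fun (ih 0) (orderedBoundary E n (Finsupp.single v 1))
    simp only [LinearMap.comp_apply, Finsupp.lmapDomain_apply, ← orderedBoundary_mapDomain,
      Finsupp.mapDomain_single] at this
    simp only [LinearMap.comp_apply, Finsupp.lsingle_apply, Finsupp.lmapDomain_apply,
      Finsupp.mapDomain_single, orderedSd_succ_single, orderedCone_mapDomain, hf, this]

lemma orderedSdHomotopy_mapDomain (hf : ∀ n v, f (β n v) = β' n (f ∘ v)) (n : ℕ)
    (x : (Fin n → E) →₀ ℚ) :
    orderedSdHomotopy β' n (x.mapDomain (f ∘ ·)) =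
      (orderedSdHomotopy β n x).mapDomain (f ∘ ·) := by
  suffices h : orderedSdHomotopy β' n ∘ₗ Finsupp.lmapDomain ℚ ℚ (f ∘ ·) =
      Finsupp.lmapDomain ℚ ℚ (f ∘ ·) ∘ₗ orderedSdHomotopy β n from LinearMap.congr_fun h x
  induction n with
  | zero => simp [orderedSdHomotopy]
  | succ n ih =>
    refine Finsupp.lhom_ext' fun v => LinearMap.ext_ring ?_
    have := LinearMap.congr_fun (ih 0) (orderedBoundary E n (Finsupp.single v 1))
    simp only [LinearMap.comp_apply, Finsupp.lmapDomain_apply, ← orderedBoundary_mapDomain,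
      Finsupp.mapDomain_single] at this
    simp only [LinearMap.comp_apply, Finsupp.lsingle_apply, Finsupp.lmapDomain_apply,
      Finsupp.mapDomain_single, orderedSdHomotopy_succ_single, orderedCone_mapDomain, hf]
    congr 1
    rw [← Finsupp.lmapDomain_apply ℚ ℚ, map_sub]
    simp only [this, Finsupp.lmapDomain_apply, Finsupp.mapDomain_single]

end Naturality

end OrderedChains

section SingularChains

/-- The affine map between standard simplices with prescribed images of the vertices. -/
noncomputable def affineSimplex {n m : ℕ} (v : Fin n → stdSimplex ℝ (Fin m)) :
    C(stdSimplex ℝ (Fin n), stdSimplex ℝ (Fin m)) where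
  toFun w := ⟨fun j => ∑ i, w i * v i j,
    fun j => Finset.sum_nonneg fun i _ => mul_nonneg (w.2.1 i) ((v i).2.1 j), by
      rw [Finset.sum_comm]
      simp [← Finset.mul_sum]⟩
  continuous_toFun := by
    refine Continuous.subtype_mk (continuous_pi fun j => continuous_finsetSum _ fun i _ => ?_) _
    exact ((continuous_apply i).comp continuous_subtype_val).mul continuous_const

lemma affineSimplex_apply {n m : ℕ} (v : Fin n → stdSimplex ℝ (Fin m))
    (w : stdSimplex ℝ (Fin n)) (j : Fin m) : affineSimplex v w j = ∑ i, w i * v i j := rfl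

lemma affineSimplex_vertex {n m : ℕ} (v : Fin n → stdSimplex ℝ (Fin m)) (i : Fin n) :
    affineSimplex v (stdSimplex.vertex i) = v i := by
  refine stdSimplex.ext (funext fun j => ?_)
  simp [affineSimplex_apply, Pi.single_apply]

lemma affineSimplex_vertices (n : ℕ) :
    affineSimplex (fun i : Fin n => stdSimplex.vertex i) = ContinuousMap.id _ := by
  refine ContinuousMap.ext fun w => stdSimplex.ext (funext fun j => ?_)
  simp [affineSimplex_apply, Pi.single_apply]

lemma affineSimplex_comp {n m l : ℕ} (u : Fin m → stdSimplex ℝ (Fin l))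
    (v : Fin n → stdSimplex ℝ (Fin m)) :
    (affineSimplex u).comp (affineSimplex v) = affineSimplex (affineSimplex u ∘ v) := by
  refine ContinuousMap.ext fun w => stdSimplex.ext (funext fun j => ?_)
  simp only [ContinuousMap.comp_apply, affineSimplex_apply, Function.comp_apply, Finset.sum_mul,
    Finset.mul_sum]
  rw [Finset.sum_comm]
  simp [mul_assoc]

/-- The inclusion of the `i`-th face of a standard simplex. -/
noncomputable def faceInclusion {n : ℕ} (i : Fin (n + 1)) :
    C(stdSimplex ℝ (Fin n), stdSimplex ℝ (Fin (n + 1))) :=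
  ⟨_, stdSimplex.continuous_map i.succAbove⟩

lemma affineSimplex_comp_faceInclusion {n m : ℕ} (v : Fin (n + 1) → stdSimplex ℝ (Fin m))
    (i : Fin (n + 1)) :
    (affineSimplex v).comp (faceInclusion i) = affineSimplex (v ∘ i.succAbove) := by
  have : faceInclusion i = affineSimplex (fun j : Fin n => stdSimplex.vertex (i.succAbove j)) := by
    refine ContinuousMap.ext fun w => stdSimplex.ext (funext fun j => ?_)
    simp [faceInclusion, affineSimplex_apply, FunOnFinite.linearMap_apply_apply,
      Pi.single_apply, Finset.sum_filter, eq_comm]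
  rw [this, affineSimplex_comp]
  congr 1
  funext j
  exact affineSimplex_vertex _ _

/-- The barycentre of a simplex given by its vertices. -/
noncomputable def simplexCenter {m : ℕ} (n : ℕ) (v : Fin (n + 1) → stdSimplex ℝ (Fin m)) :
    stdSimplex ℝ (Fin m) :=
  affineSimplex v stdSimplex.barycenter

lemma affineSimplex_simplexCenter {n m l : ℕ} (u : Fin m → stdSimplex ℝ (Fin l))
    (v : Fin (n + 1) → stdSimplex ℝ (Fin m)) :
    affineSimplex u (simplexCenter n v) = simplexCenter n (affineSimplex u ∘ v) :=
  DFunLike.congr_fun (affineSimplex_comp u v) _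

variable {X : Type} [TopologicalSpace X]

/-- The boundary on the augmented singular chain complex of `X`, with `(n - 1)`-simplices in
degree `n`. -/
noncomputable def singularBoundary (X : Type) [TopologicalSpace X] (n : ℕ) :
    (C(stdSimplex ℝ (Fin (n + 1)), X) →₀ ℚ) →ₗ[ℚ] (C(stdSimplex ℝ (Fin n), X) →₀ ℚ) :=
  ∑ i : Fin (n + 1), (-1 : ℚ) ^ (i : ℕ) •
    Finsupp.lmapDomain ℚ ℚ (fun σ => σ.comp (faceInclusion i))

/-- The singular chain in `X` obtained from an ordered chain in a standard simplex by
a singular simplex of `X`. -/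
noncomputable def realizeChain {m : ℕ} (σ : C(stdSimplex ℝ (Fin m), X)) (n : ℕ) :
    ((Fin n → stdSimplex ℝ (Fin m)) →₀ ℚ) →ₗ[ℚ] (C(stdSimplex ℝ (Fin n), X) →₀ ℚ) :=
  Finsupp.lmapDomain ℚ ℚ fun v => σ.comp (affineSimplex v)

lemma realizeChain_single {m n : ℕ} (σ : C(stdSimplex ℝ (Fin m), X))
    (v : Fin n → stdSimplex ℝ (Fin m)) :
    realizeChain σ n (Finsupp.single v 1) = Finsupp.single (σ.comp (affineSimplex v)) 1 := by
  simp [realizeChain]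

/-- The fundamental ordered chain of a standard simplex. -/
noncomputable def vertexChain (n : ℕ) : (Fin n → stdSimplex ℝ (Fin n)) →₀ ℚ :=
  Finsupp.single (fun i => stdSimplex.vertex i) 1

lemma realizeChain_vertexChain {n : ℕ} (σ : C(stdSimplex ℝ (Fin n), X)) :
    realizeChain σ n (vertexChain n) = Finsupp.single σ 1 := by
  rw [vertexChain, realizeChain_single, affineSimplex_vertices, ContinuousMap.comp_id]

lemma singularBoundary_realizeChain {m : ℕ} (σ : C(stdSimplex ℝ (Fin m), X)) (n : ℕ)
    (x : (Fin (n + 1) → stdSimplex ℝ (Fin m)) →₀ ℚ) :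
    singularBoundary X n (realizeChain σ (n + 1) x) =
      realizeChain σ n (orderedBoundary _ n x) := by
  suffices h : singularBoundary X n ∘ₗ realizeChain σ (n + 1) =
      realizeChain σ n ∘ₗ orderedBoundary _ n from LinearMap.congr_fun h x
  refine Finsupp.lhom_ext' fun v => LinearMap.ext_ring ?_
  simp only [LinearMap.comp_apply, Finsupp.lsingle_apply, orderedBoundary_single, map_sum,
    map_smul, realizeChain_single, singularBoundary, LinearMap.sum_apply, LinearMap.smul_apply,
    Finsupp.lmapDomain_apply, Finsupp.mapDomain_single, ContinuousMap.comp_assoc,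
    affineSimplex_comp_faceInclusion]

lemma singularBoundary_comp (n : ℕ) (x : C(stdSimplex ℝ (Fin (n + 2)), X) →₀ ℚ) :
    singularBoundary X n (singularBoundary X (n + 1) x) = 0 := by
  suffices h : singularBoundary X n ∘ₗ singularBoundary X (n + 1) = 0 from LinearMap.congr_fun h x
  refine Finsupp.lhom_ext' fun σ => LinearMap.ext_ring ?_
  simp only [LinearMap.comp_apply, Finsupp.lsingle_apply]
  rw [← realizeChain_vertexChain, singularBoundary_realizeChain, singularBoundary_realizeChain,
    orderedBoundary_comp, map_zero, LinearMap.zero_apply]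

lemma realizeChain_mapDomain {m l n : ℕ} (σ : C(stdSimplex ℝ (Fin l), X))
    (u : Fin m → stdSimplex ℝ (Fin l)) (x : (Fin n → stdSimplex ℝ (Fin m)) →₀ ℚ) :
    realizeChain (σ.comp (affineSimplex u)) n x =
      realizeChain σ n (x.mapDomain (affineSimplex u ∘ ·)) := by
  simp only [realizeChain, Finsupp.lmapDomain_apply, ← Finsupp.mapDomain_comp]
  congr 1
  funext v
  simp [ContinuousMap.comp_assoc, affineSimplex_comp]

/-- Barycentric subdivision of singular chains. -/
noncomputable def singularSd (X : Type) [TopologicalSpace X] (n : ℕ) :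
    (C(stdSimplex ℝ (Fin n), X) →₀ ℚ) →ₗ[ℚ] (C(stdSimplex ℝ (Fin n), X) →₀ ℚ) :=
  Finsupp.linearCombination ℚ fun σ =>
    realizeChain σ n (orderedSd simplexCenter n (vertexChain n))

/-- The chain homotopy between the identity and barycentric subdivision. -/
noncomputable def singularSdHomotopy (X : Type) [TopologicalSpace X] (n : ℕ) :
    (C(stdSimplex ℝ (Fin n), X) →₀ ℚ) →ₗ[ℚ] (C(stdSimplex ℝ (Fin (n + 1)), X) →₀ ℚ) :=
  Finsupp.linearCombination ℚ fun σ =>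
    realizeChain σ (n + 1) (orderedSdHomotopy simplexCenter n (vertexChain n))

lemma mapDomain_vertexChain {m n : ℕ} (v : Fin n → stdSimplex ℝ (Fin m)) :
    (vertexChain n).mapDomain (affineSimplex v ∘ ·) = Finsupp.single v 1 := by
  rw [vertexChain, Finsupp.mapDomain_single]
  congr 1
  funext i
  exact affineSimplex_vertex v i

lemma singularSd_realizeChain {m : ℕ} (σ : C(stdSimplex ℝ (Fin m), X)) (n : ℕ)
    (x : (Fin n → stdSimplex ℝ (Fin m)) →₀ ℚ) :
    singularSd X n (realizeChain σ n x) = realizeChain σ n (orderedSd simplexCenter n x) := by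
  suffices h : singularSd X n ∘ₗ realizeChain σ n = realizeChain σ n ∘ₗ orderedSd simplexCenter n
    from LinearMap.congr_fun h x
  refine Finsupp.lhom_ext' fun v => LinearMap.ext_ring ?_
  simp only [LinearMap.comp_apply, Finsupp.lsingle_apply, realizeChain_single, singularSd,
    Finsupp.linearCombination_single, one_smul]
  rw [realizeChain_mapDomain, ← orderedSd_mapDomain (β' := simplexCenter)
    (fun _ _ => affineSimplex_simplexCenter _ _), mapDomain_vertexChain]

lemma singularSdHomotopy_realizeChain {m : ℕ} (σ : C(stdSimplex ℝ (Fin m), X)) (n : ℕ)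
    (x : (Fin n → stdSimplex ℝ (Fin m)) →₀ ℚ) :
    singularSdHomotopy X n (realizeChain σ n x) =
      realizeChain σ (n + 1) (orderedSdHomotopy simplexCenter n x) := by
  suffices h : singularSdHomotopy X n ∘ₗ realizeChain σ n =
      realizeChain σ (n + 1) ∘ₗ orderedSdHomotopy simplexCenter n from LinearMap.congr_fun h x
  refine Finsupp.lhom_ext' fun v => LinearMap.ext_ring ?_
  simp only [LinearMap.comp_apply, Finsupp.lsingle_apply, realizeChain_single, singularSdHomotopy,
    Finsupp.linearCombination_single, one_smul]
  rw [realizeChain_mapDomain, ← orderedSdHomotopy_mapDomain (β' := simplexCenter)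
    (fun _ _ => affineSimplex_simplexCenter _ _), mapDomain_vertexChain]

lemma singularBoundary_singularSd (n : ℕ) (x : C(stdSimplex ℝ (Fin (n + 1)), X) →₀ ℚ) :
    singularBoundary X n (singularSd X (n + 1) x) = singularSd X n (singularBoundary X n x) := by
  suffices h : singularBoundary X n ∘ₗ singularSd X (n + 1) =
      singularSd X n ∘ₗ singularBoundary X n from LinearMap.congr_fun h x
  refine Finsupp.lhom_ext' fun σ => LinearMap.ext_ring ?_
  simp only [LinearMap.comp_apply, Finsupp.lsingle_apply]
  rw [← realizeChain_vertexChain, singularSd_realizeChain, singularBoundary_realizeChain,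
    singularBoundary_realizeChain, singularSd_realizeChain, orderedBoundary_orderedSd]

lemma singularBoundary_singularSdHomotopy (n : ℕ)
    (x : C(stdSimplex ℝ (Fin (n + 1)), X) →₀ ℚ) :
    singularBoundary X (n + 1) (singularSdHomotopy X (n + 1) x) =
      x - singularSd X (n + 1) x - singularSdHomotopy X n (singularBoundary X n x) := by
  suffices h : singularBoundary X (n + 1) ∘ₗ singularSdHomotopy X (n + 1) =
      LinearMap.id - singularSd X (n + 1) - singularSdHomotopy X n ∘ₗ singularBoundary X n
    from LinearMap.congr_fun h x
  refine Finsupp.lhom_ext' fun σ => LinearMap.ext_ring ?_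
  simp only [LinearMap.comp_apply, Finsupp.lsingle_apply, LinearMap.sub_apply, LinearMap.id_apply]
  rw [← realizeChain_vertexChain, singularSd_realizeChain, singularSdHomotopy_realizeChain,
    singularBoundary_realizeChain, singularBoundary_realizeChain, singularSdHomotopy_realizeChain,
    orderedBoundary_orderedSdHomotopy, map_sub, map_sub]

end SingularChains

section SmallChains

lemma Finsupp.map_mem_of_mem_supported {α M : Type*} [AddCommGroup M] [Module ℚ M]
    (f : (α →₀ ℚ) →ₗ[ℚ] M) {s : Set α} {N : Submodule ℚ M}
    (h : ∀ a ∈ s, f (Finsupp.single a 1) ∈ N) {x : α →₀ ℚ} (hx : x ∈ Finsupp.supported ℚ ℚ s) :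
    f x ∈ N := by
  rw [Finsupp.supported_eq_span_single] at hx
  suffices Submodule.span ℚ ((fun i => Finsupp.single i (1 : ℚ)) '' s) ≤ N.comap f from this hx
  rw [Submodule.span_le]
  rintro _ ⟨a, ha, rfl⟩
  exact h a ha

/-- The point `x` lies in every closed ball containing all the points `v j`. -/
def InBallHull {n m : ℕ} (x : stdSimplex ℝ (Fin m)) (v : Fin n → stdSimplex ℝ (Fin m)) : Prop :=
  ∀ p c, (∀ j, dist p (v j) ≤ c) → dist p x ≤ c

lemma affineSimplex_inBallHull {n m : ℕ} (v : Fin n → stdSimplex ℝ (Fin m))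
    (w : stdSimplex ℝ (Fin n)) : InBallHull (affineSimplex v w) v := by
  intro p c hc
  have hw : ∑ i, w i = 1 := stdSimplex.sum_eq_one w
  have hc0 : 0 ≤ c := by
    rcases n with _ | n
    · simp at hw
    · exact dist_nonneg.trans (hc 0)
  rw [Subtype.dist_eq, dist_pi_le_iff hc0]
  intro k
  have hk : ∀ j, |p k - v j k| ≤ c := fun j => by
    have := hc j
    rw [Subtype.dist_eq, dist_pi_le_iff hc0] at this
    exact this k
  change |p k - ∑ i, w i * v i k| ≤ c
  calc |p k - ∑ i, w i * v i k| = |∑ i, w i * (p k - v i k)| := by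
        simp only [mul_sub, Finset.sum_sub_distrib, ← Finset.sum_mul, hw, one_mul]
    _ ≤ ∑ i, |w i * (p k - v i k)| := Finset.abs_sum_le_sum_abs _ _
    _ ≤ ∑ i, w i * c := Finset.sum_le_sum fun i _ => by
        rw [abs_mul, abs_of_nonneg (show 0 ≤ w i from w.2.1 i)]
        exact mul_le_mul_of_nonneg_left (hk i) (w.2.1 i)
    _ = c := by rw [← Finset.sum_mul, hw, one_mul]

lemma dist_simplexCenter_le {n m : ℕ} (v : Fin (n + 1) → stdSimplex ℝ (Fin m)) {r : ℝ}
    (hr : ∀ i j, dist (v i) (v j) ≤ r) (j : Fin (n + 1)) :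
    dist (simplexCenter n v) (v j) ≤ n / (n + 1) * r := by
  have hr0 : 0 ≤ r := dist_nonneg.trans (hr 0 0)
  rw [Subtype.dist_eq, dist_pi_le_iff (by positivity)]
  intro k
  have hk : ∀ i, |v i k - v j k| ≤ r := fun i => by
    have := hr i j
    rw [Subtype.dist_eq, dist_pi_le_iff hr0] at this
    exact this k
  change |∑ i, (stdSimplex.barycenter : stdSimplex ℝ (Fin (n + 1))) i * v i k - v j k| ≤ _
  have hb : ∀ i, (stdSimplex.barycenter : stdSimplex ℝ (Fin (n + 1))) i = ((n + 1 : ℕ) : ℝ)⁻¹ :=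
    fun i => (stdSimplex.barycenter_apply i).trans (by simp)
  simp only [hb]
  calc |∑ i, ((n + 1 : ℕ) : ℝ)⁻¹ * v i k - v j k|
      = |∑ i, ((n + 1 : ℕ) : ℝ)⁻¹ * (v i k - v j k)| := by
        congr 1
        simp only [mul_sub, Finset.sum_sub_distrib]
        simp
        field_simp
    _ ≤ ∑ i, |((n + 1 : ℕ) : ℝ)⁻¹ * (v i k - v j k)| := Finset.abs_sum_le_sum_abs _ _
    _ = ∑ i : Fin n, |((n + 1 : ℕ) : ℝ)⁻¹ * (v (j.succAbove i) k - v j k)| := by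
        rw [Fin.sum_univ_succAbove _ j]
        simp
    _ ≤ ∑ i : Fin n, ((n + 1 : ℕ) : ℝ)⁻¹ * r := Finset.sum_le_sum fun i _ => by
        rw [abs_mul, abs_of_nonneg (by positivity)]
        exact mul_le_mul_of_nonneg_left (hk _) (by positivity)
    _ = n / (n + 1) * r := by
        simp
        ring

lemma orderedSd_single_mem_supported {m : ℕ} (n : ℕ) (v : Fin n → stdSimplex ℝ (Fin m)) {r : ℝ}
    (hr0 : 0 ≤ r) (hr : ∀ i j, dist (v i) (v j) ≤ r) :
    orderedSd simplexCenter n (Finsupp.single v 1) ∈ Finsupp.supported ℚ ℚ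
      {w | (∀ i, InBallHull (w i) v) ∧ ∀ i j, dist (w i) (w j) ≤ (n - 1) / n * r} := by
  induction n with
  | zero =>
    refine Finsupp.single_mem_supported _ _ ⟨fun i => i.elim0, fun i => i.elim0⟩
  | succ n ih =>
    rw [orderedSd_succ_single]
    refine Finsupp.map_mem_of_mem_supported (s := {w | (∀ i, InBallHull (w i) v) ∧
      ∀ i j, dist (w i) (w j) ≤ n / (n + 1) * r}) _ ?_ ?_
    · rintro w ⟨hw, hw'⟩
      rw [orderedCone_single]
      refine Finsupp.single_mem_supported _ _ ⟨?_, ?_⟩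
      · refine Fin.cases ?_ (fun i => ?_)
        · exact affineSimplex_inBallHull _ _
        · simpa using hw i
      · have h1 : ∀ i, dist (simplexCenter n v) (w i) ≤ n / (n + 1) * r := fun i =>
          hw i _ _ (dist_simplexCenter_le v hr)
        push_cast
        rw [add_sub_cancel_right]
        refine Fin.cases (Fin.cases ?_ fun j => ?_) (fun i => Fin.cases ?_ fun j => ?_)
        · simp only [dist_self]
          positivity
        · simpa using h1 j
        · simpa [dist_comm] using h1 i
        · simpa using hw' i j
    · rw [orderedBoundary_single, map_sum]
      refine Submodule.sum_mem _ fun i _ => ?_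
      rw [map_smul]
      refine Submodule.smul_mem _ _ ?_
      refine Finsupp.supported_mono ?_ (ih (v ∘ i.succAbove) fun a b => hr _ _)
      rintro w ⟨hw, hw'⟩
      refine ⟨fun j p c hc => hw j p c fun a => hc _, fun a b => (hw' a b).trans ?_⟩
      have hn : (0 : ℝ) < n := by
        have := a.pos
        positivity
      refine mul_le_mul_of_nonneg_right ?_ hr0
      rw [div_le_div_iff₀ hn (by positivity)]
      nlinarith

lemma orderedSd_iterate_mem_supported {m : ℕ} (n : ℕ) (v : Fin n → stdSimplex ℝ (Fin m)) {r : ℝ}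
    (hr0 : 0 ≤ r) (hr : ∀ i j, dist (v i) (v j) ≤ r) (k : ℕ) :
    (orderedSd simplexCenter n)^[k] (Finsupp.single v 1) ∈ Finsupp.supported ℚ ℚ
      {w | ∀ i j, dist (w i) (w j) ≤ ((n - 1) / n) ^ k * r} := by
  induction k with
  | zero => exact Finsupp.single_mem_supported _ _ (by simpa using hr)
  | succ k ih =>
    rw [Function.iterate_succ_apply']
    refine Finsupp.map_mem_of_mem_supported _ (fun w hw => ?_) ih
    rcases Nat.eq_zero_or_pos n with rfl | hn
    · exact Finsupp.single_mem_supported _ _ fun i => i.elim0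
    have h0 : (0 : ℝ) ≤ (n - 1) / n := by
      have : (1 : ℝ) ≤ n := by exact_mod_cast hn
      exact div_nonneg (by linarith) (by linarith)
    refine Finsupp.supported_mono ?_
      (orderedSd_single_mem_supported n w (by positivity) hw)
    rintro w' ⟨-, hw'⟩ i j
    rw [pow_succ', mul_assoc]
    exact hw' i j

variable {X : Type} [TopologicalSpace X]

/-- The singular chains whose simplices lie in `U` or in `V`. -/
noncomputable def smallChains (U V : Set X) (n : ℕ) :
    Submodule ℚ (C(stdSimplex ℝ (Fin n), X) →₀ ℚ) :=
  Finsupp.supported ℚ ℚ {σ | (∀ w, σ w ∈ U) ∨ ∀ w, σ w ∈ V}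

variable {U V : Set X}

lemma realizeChain_mem_smallChains {m : ℕ} {σ : C(stdSimplex ℝ (Fin m), X)}
    (hσ : (∀ w, σ w ∈ U) ∨ ∀ w, σ w ∈ V) (n : ℕ) (x : (Fin n → stdSimplex ℝ (Fin m)) →₀ ℚ) :
    realizeChain σ n x ∈ smallChains U V n := by
  refine Finsupp.map_mem_of_mem_supported (s := Set.univ) _ (fun v _ => ?_) (by simp)
  rw [realizeChain_single]
  exact Finsupp.single_mem_supported _ _ (hσ.imp (fun h w => h _) (fun h w => h _))

lemma singularBoundary_mem_smallChains (n : ℕ) {x : C(stdSimplex ℝ (Fin (n + 1)), X) →₀ ℚ}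
    (hx : x ∈ smallChains U V (n + 1)) : singularBoundary X n x ∈ smallChains U V n := by
  refine Finsupp.map_mem_of_mem_supported _ (fun σ hσ => ?_) hx
  rw [← realizeChain_vertexChain, singularBoundary_realizeChain]
  exact realizeChain_mem_smallChains hσ _ _

lemma singularSd_mem_smallChains (n : ℕ) {x : C(stdSimplex ℝ (Fin n), X) →₀ ℚ}
    (hx : x ∈ smallChains U V n) : singularSd X n x ∈ smallChains U V n := by
  refine Finsupp.map_mem_of_mem_supported _ (fun σ hσ => ?_) hx
  rw [← realizeChain_vertexChain, singularSd_realizeChain]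
  exact realizeChain_mem_smallChains hσ _ _

lemma singularSdHomotopy_mem_smallChains (n : ℕ) {x : C(stdSimplex ℝ (Fin n), X) →₀ ℚ}
    (hx : x ∈ smallChains U V n) : singularSdHomotopy X n x ∈ smallChains U V (n + 1) := by
  refine Finsupp.map_mem_of_mem_supported _ (fun σ hσ => ?_) hx
  rw [← realizeChain_vertexChain, singularSdHomotopy_realizeChain]
  exact realizeChain_mem_smallChains hσ _ _

lemma singularSd_iterate_mem_smallChains (n : ℕ) {x : C(stdSimplex ℝ (Fin n), X) →₀ ℚ}
    (hx : x ∈ smallChains U V n) (k : ℕ) : (singularSd X n)^[k] x ∈ smallChains U V n := by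
  induction k with
  | zero => exact hx
  | succ k ih =>
    rw [Function.iterate_succ_apply']
    exact singularSd_mem_smallChains n ih

lemma exists_singularSd_iterate_single_mem (hU : IsOpen U) (hV : IsOpen V)
    (hUV : U ∪ V = Set.univ) {n : ℕ} (σ : C(stdSimplex ℝ (Fin n), X)) :
    ∃ k, (singularSd X n)^[k] (Finsupp.single σ 1) ∈ smallChains U V n := by
  obtain ⟨δ, hδ, hball⟩ := lebesgue_number_lemma_of_metric (s := Set.univ)
    (c := fun b : Bool => σ ⁻¹' (if b then U else V)) isCompact_univ
    (fun b => by cases b <;> simp [hU.preimage σ.continuous, hV.preimage σ.continuous])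
    (fun w _ => by
      have : σ w ∈ U ∪ V := hUV ▸ Set.mem_univ _
      rcases this with h | h
      · exact Set.mem_iUnion.2 ⟨true, h⟩
      · exact Set.mem_iUnion.2 ⟨false, h⟩)
  have hq : |((n : ℝ) - 1) / n| < 1 := by
    rcases Nat.eq_zero_or_pos n with rfl | hn
    · simp
    have hn' : (1 : ℝ) ≤ n := by exact_mod_cast hn
    rw [abs_of_nonneg (div_nonneg (by linarith) (by linarith)), div_lt_one (by linarith)]
    linarith
  obtain ⟨D, hD0, hD⟩ : ∃ D : ℝ, 0 ≤ D ∧ ∀ x y : stdSimplex ℝ (Fin n), dist x y ≤ D := by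
    obtain ⟨D, hD⟩ := Metric.isBounded_iff.1
      (isCompact_univ : IsCompact (Set.univ : Set (stdSimplex ℝ (Fin n)))).isBounded
    exact ⟨max D 0, le_max_right _ _, fun x y => (hD trivial trivial).trans (le_max_left _ _)⟩
  have hlim : Filter.Tendsto (fun k => (((n : ℝ) - 1) / n) ^ k * D) Filter.atTop (nhds 0) := by
    simpa using (tendsto_pow_atTop_nhds_zero_of_abs_lt_one hq).mul_const D
  obtain ⟨k, hk⟩ := (hlim.eventually (gt_mem_nhds hδ)).exists
  refine ⟨k, ?_⟩
  have hiter : ∀ k x, (singularSd X n)^[k] (realizeChain σ n x) =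
      realizeChain σ n ((orderedSd simplexCenter n)^[k] x) := by
    intro k
    induction k with
    | zero => exact fun _ => rfl
    | succ k ih =>
      intro x
      rw [Function.iterate_succ_apply, Function.iterate_succ_apply, singularSd_realizeChain, ih]
  rw [← realizeChain_vertexChain, hiter]
  refine Finsupp.map_mem_of_mem_supported _ (fun v hv => ?_)
    (orderedSd_iterate_mem_supported n _ hD0 (fun _ _ => hD _ _) k)
  rw [realizeChain_single]
  refine Finsupp.single_mem_supported _ _ ?_
  rcases Nat.eq_zero_or_pos n with rfl | hn
  · refine Or.inl fun w => ?_
    have := stdSimplex.sum_eq_one w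
    simp at this
  obtain ⟨b, hb⟩ := hball (v ⟨0, hn⟩) trivial
  have hmem : ∀ w, affineSimplex v w ∈ σ ⁻¹' (if b then U else V) := fun w => hb <| by
    rw [Metric.mem_ball, dist_comm]
    exact (affineSimplex_inBallHull v w _ _ fun j => hv _ _).trans_lt hk
  cases b
  · exact Or.inr hmem
  · exact Or.inl hmem

lemma exists_singularSd_iterate_mem (hU : IsOpen U) (hV : IsOpen V)
    (hUV : U ∪ V = Set.univ) {n : ℕ} (x : C(stdSimplex ℝ (Fin n), X) →₀ ℚ) :
    ∃ k, (singularSd X n)^[k] x ∈ smallChains U V n := by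
  have hpow : ∀ k x, (singularSd X n)^[k] x = (singularSd X n ^ k) x := fun k x =>
    (Module.End.pow_apply _ _ _).symm
  induction x using Finsupp.induction_linear with
  | zero => exact ⟨0, Submodule.zero_mem _⟩
  | add x y hx hy =>
    obtain ⟨k, hk⟩ := hx
    obtain ⟨l, hl⟩ := hy
    refine ⟨l + k, ?_⟩
    rw [hpow, map_add, ← hpow, ← hpow, Function.iterate_add_apply, add_comm l,
      Function.iterate_add_apply]
    exact Submodule.add_mem _ (singularSd_iterate_mem_smallChains n hk l)
      (singularSd_iterate_mem_smallChains n hl k)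
  | single σ a =>
    obtain ⟨k, hk⟩ := exists_singularSd_iterate_single_mem hU hV hUV σ
    refine ⟨k, ?_⟩
    rw [← mul_one a, ← smul_eq_mul, ← Finsupp.smul_single, hpow, map_smul, ← hpow]
    exact Submodule.smul_mem _ _ hk

/-- The quotient of the singular chains by the small chains is acyclic. -/
lemma exists_sub_singularBoundary_mem_smallChains (hU : IsOpen U) (hV : IsOpen V)
    (hUV : U ∪ V = Set.univ) {n : ℕ} (x : C(stdSimplex ℝ (Fin (n + 1)), X) →₀ ℚ)
    (hx : singularBoundary X n x ∈ smallChains U V n) :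
    ∃ e, x - singularBoundary X (n + 1) e ∈ smallChains U V (n + 1) := by
  obtain ⟨k, hk⟩ := exists_singularSd_iterate_mem hU hV hUV x
  suffices h : ∀ k, singularBoundary X n ((singularSd X (n + 1))^[k] x) ∈ smallChains U V n ∧
      ∃ e, x - (singularSd X (n + 1))^[k] x - singularBoundary X (n + 1) e ∈
        smallChains U V (n + 1) by
    obtain ⟨-, e, he⟩ := h k
    refine ⟨e, ?_⟩
    convert Submodule.add_mem _ he hk using 1
    abel
  intro k
  clear hk
  induction k with
  | zero => exact ⟨hx, 0, by simp⟩
  | succ k ih =>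
    obtain ⟨h1, e, he⟩ := ih
    rw [Function.iterate_succ_apply']
    refine ⟨?_, e + singularSdHomotopy X (n + 1) ((singularSd X (n + 1))^[k] x), ?_⟩
    · rw [singularBoundary_singularSd]
      exact singularSd_mem_smallChains n h1
    · rw [map_add, singularBoundary_singularSdHomotopy]
      convert Submodule.add_mem _ he (singularSdHomotopy_mem_smallChains n h1) using 1
      abel

end SmallChains

section EulerChar

lemma finrank_eq_add_of_range_eq_ker {M N P : Type*} [AddCommGroup M] [Module ℚ M]
    [AddCommGroup N] [Module ℚ N] [AddCommGroup P] [Module ℚ P] [Module.Finite ℚ N]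
    {f : M →ₗ[ℚ] N} {g : N →ₗ[ℚ] P} (h : LinearMap.range f = LinearMap.ker g) :
    Module.finrank ℚ N = Module.finrank ℚ (LinearMap.range f) +
      Module.finrank ℚ (LinearMap.range g) := by
  rw [h, add_comm, LinearMap.finrank_range_add_finrank_ker]

lemma finite_of_range_eq_ker {M N P : Type*} [AddCommGroup M] [Module ℚ M]
    [AddCommGroup N] [Module ℚ N] [AddCommGroup P] [Module ℚ P] [Module.Finite ℚ M]
    [Module.Finite ℚ P] {f : M →ₗ[ℚ] N} {g : N →ₗ[ℚ] P}
    (h : LinearMap.range f = LinearMap.ker g) : Module.Finite ℚ N :=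
  have := isNoetherian_of_range_eq_ker f g h
  inferInstance

/-- The homology of `K` is finite-dimensional, vanishes in degrees `≥ D`, and has Euler
characteristic `χ`. -/
structure HasEulerChar (K : ChainComplex (ModuleCat.{0} ℚ) ℕ) (D : ℕ) (χ : ℤ) : Prop where
  finite : ∀ i, Module.Finite ℚ (K.homology i)
  finrank_eq_zero : ∀ i, D ≤ i → Module.finrank ℚ (K.homology i) = 0
  sum_eq : ∑ i ∈ Finset.range D, (-1 : ℤ) ^ i * Module.finrank ℚ (K.homology i) = χ

namespace HasEulerChar

variable {K L : ChainComplex (ModuleCat.{0} ℚ) ℕ} {D D' : ℕ} {χ χ' : ℤ}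

lemma sum_eq_of_le (h : HasEulerChar K D χ) (hD : D ≤ D') :
    ∑ i ∈ Finset.range D', (-1 : ℤ) ^ i * Module.finrank ℚ (K.homology i) = χ := by
  rw [← h.sum_eq]
  refine (Finset.sum_subset (Finset.range_mono hD) fun i _ hi => ?_).symm
  rw [h.finrank_eq_zero i (by simpa using hi)]
  simp

lemma mono (h : HasEulerChar K D χ) (hD : D ≤ D') : HasEulerChar K D' χ :=
  ⟨h.finite, fun i hi => h.finrank_eq_zero i (hD.trans hi), h.sum_eq_of_le hD⟩

lemma of_homology_iso (h : HasEulerChar K D χ) (e : ∀ i, Nonempty (K.homology i ≅ L.homology i)) :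
    HasEulerChar L D χ := by
  have hr : ∀ i, Module.finrank ℚ (K.homology i) = Module.finrank ℚ (L.homology i) := fun i =>
    (e i).some.toLinearEquiv.finrank_eq
  exact ⟨fun i => have := h.finite i; Module.Finite.equiv (e i).some.toLinearEquiv,
    fun i hi => hr i ▸ h.finrank_eq_zero i hi, by simpa only [hr] using h.sum_eq⟩

lemma of_iso (h : HasEulerChar K D χ) (e : K ≅ L) : HasEulerChar L D χ :=
  h.of_homology_iso fun i => ⟨(HomologicalComplex.homologyFunctor _ _ i).mapIso e⟩

lemma of_homotopyEquiv (h : HasEulerChar K D χ) (e : HomotopyEquiv K L) : HasEulerChar L D χ :=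
  h.of_homology_iso fun i => ⟨e.toHomologyIso i⟩

lemma of_exactAt (h : ∀ i, K.ExactAt i) : HasEulerChar K 0 0 := by
  have : ∀ i, Subsingleton (K.homology i) := fun i =>
    ModuleCat.subsingleton_of_isZero (h i).isZero_homology
  exact ⟨fun i => inferInstance, fun i _ => Module.finrank_zero_of_subsingleton, by simp⟩

end HasEulerChar

variable {S : ShortComplex (ChainComplex (ModuleCat.{0} ℚ) ℕ)}

/-- Dimension count in the long exact homology sequence. -/
lemma exists_rank_long_exact (hS : S.ShortExact) (h₁ : ∀ i, Module.Finite ℚ (S.X₁.homology i))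
    (h₂ : ∀ i, Module.Finite ℚ (S.X₂.homology i)) (h₃ : ∀ i, Module.Finite ℚ (S.X₃.homology i)) :
    ∃ t : ℕ → ℕ, (∀ i, t i ≤ Module.finrank ℚ (S.X₁.homology i)) ∧
      Module.finrank ℚ (S.X₂.homology 0) + t 0 =
        Module.finrank ℚ (S.X₁.homology 0) + Module.finrank ℚ (S.X₃.homology 0) ∧
      ∀ i, Module.finrank ℚ (S.X₂.homology (i + 1)) + t (i + 1) + t i =
        Module.finrank ℚ (S.X₁.homology (i + 1)) + Module.finrank ℚ (S.X₃.homology (i + 1)) := by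
  have e₁ := fun i => finrank_eq_add_of_range_eq_ker
    (hS.homology_exact₁ (i + 1) i rfl).moduleCat_range_eq_ker
  have e₂ := fun i => finrank_eq_add_of_range_eq_ker
    (hS.homology_exact₂ i).moduleCat_range_eq_ker
  have e₃ := fun i => finrank_eq_add_of_range_eq_ker
    (hS.homology_exact₃ (i + 1) i rfl).moduleCat_range_eq_ker
  have := hS.epi_g
  have hepi : Epi (HomologicalComplex.homologyMap S.g 0) :=
    HomologicalComplex.epi_homologyMap_of_epi_of_not_rel _ _ (by simp)
  rw [ModuleCat.epi_iff_range_eq_top] at hepi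
  dsimp only at e₁ e₂ e₃
  have e₀ := finrank_top ℚ (S.X₃.homology 0)
  rw [← hepi] at e₀
  refine ⟨fun i => Module.finrank ℚ (LinearMap.range (hS.δ (i + 1) i rfl).hom),
    fun i => Submodule.finrank_le _, ?_, fun i => ?_⟩
  · dsimp only
    have := e₁ 0
    have := e₂ 0
    omega
  · dsimp only
    have := e₁ (i + 1)
    have := e₂ (i + 1)
    have := e₃ i
    omega

lemma alternating_sum_long_exact {a b c t : ℕ → ℕ} (h0 : b 0 + t 0 = a 0 + c 0)
    (h : ∀ i, b (i + 1) + t (i + 1) + t i = a (i + 1) + c (i + 1)) (N : ℕ) :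
    ∑ i ∈ Finset.range (N + 1), (-1 : ℤ) ^ i * b i + (-1) ^ N * t N =
      ∑ i ∈ Finset.range (N + 1), (-1 : ℤ) ^ i * a i +
        ∑ i ∈ Finset.range (N + 1), (-1 : ℤ) ^ i * c i := by
  induction N with
  | zero => simpa using mod_cast h0
  | succ N ih =>
    have h' : (b (N + 1) : ℤ) + t (N + 1) + t N = a (N + 1) + c (N + 1) := mod_cast h N
    rw [Finset.sum_range_succ, Finset.sum_range_succ _ (N + 1), Finset.sum_range_succ _ (N + 1)]
    linear_combination ih + (-1) ^ (N + 1) * h'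

namespace HasEulerChar

variable {a b c : ℕ} {α β γ : ℤ}

lemma shortExact_X₂ (hS : S.ShortExact) (h₁ : HasEulerChar S.X₁ a α)
    (h₃ : HasEulerChar S.X₃ c γ) : HasEulerChar S.X₂ (max a c) (α + γ) := by
  have hfin : ∀ i, Module.Finite ℚ (S.X₂.homology i) := fun i =>
    have := h₁.finite i
    have := h₃.finite i
    finite_of_range_eq_ker (hS.homology_exact₂ i).moduleCat_range_eq_ker
  obtain ⟨t, ht₁, h0, hs⟩ := exists_rank_long_exact hS h₁.finite hfin h₃.finite
  have hz : ∀ i, max a c ≤ i → Module.finrank ℚ (S.X₂.homology i) = 0 := fun i hi => by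
    have := h₁.finrank_eq_zero i (by omega)
    have := h₃.finrank_eq_zero i (by omega)
    rcases i with _ | i
    · omega
    · have := hs i
      omega
  refine ⟨hfin, hz, ?_⟩
  have hsum := alternating_sum_long_exact
    (a := fun i => Module.finrank ℚ (S.X₁.homology i))
    (b := fun i => Module.finrank ℚ (S.X₂.homology i))
    (c := fun i => Module.finrank ℚ (S.X₃.homology i)) h0 hs (max a c)
  rw [h₁.sum_eq_of_le (by omega), h₃.sum_eq_of_le (by omega), Finset.sum_range_succ,
    hz _ le_rfl] at hsum
  have : t (max a c) = 0 := by
    have := ht₁ (max a c)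
    rw [h₁.finrank_eq_zero _ (by omega)] at this
    omega
  simpa [this] using hsum

lemma shortExact_X₃ (hS : S.ShortExact) (h₁ : HasEulerChar S.X₁ a α)
    (h₂ : HasEulerChar S.X₂ b β) : HasEulerChar S.X₃ (max (a + 1) b) (β - α) := by
  have hfin : ∀ i, Module.Finite ℚ (S.X₃.homology i) := by
    rintro (_ | i)
    · have := h₂.finite 0
      have := hS.epi_g
      have hepi : Epi (HomologicalComplex.homologyMap S.g 0) :=
        HomologicalComplex.epi_homologyMap_of_epi_of_not_rel _ _ (by simp)
      rw [ModuleCat.epi_iff_surjective] at hepi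
      exact Module.Finite.of_surjective _ hepi
    · have := h₁.finite i
      have := h₂.finite (i + 1)
      exact finite_of_range_eq_ker (hS.homology_exact₃ (i + 1) i rfl).moduleCat_range_eq_ker
  obtain ⟨t, ht₁, h0, hs⟩ := exists_rank_long_exact hS h₁.finite h₂.finite hfin
  have hz : ∀ i, max (a + 1) b ≤ i → Module.finrank ℚ (S.X₃.homology i) = 0 := fun i hi => by
    have := h₁.finrank_eq_zero i (by omega)
    have := h₂.finrank_eq_zero i (by omega)
    have := ht₁ i
    rcases i with _ | i
    · omega
    · have := hs i
      have := ht₁ i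
      have := h₁.finrank_eq_zero i (by omega)
      omega
  refine ⟨hfin, hz, ?_⟩
  have hsum := alternating_sum_long_exact
    (a := fun i => Module.finrank ℚ (S.X₁.homology i))
    (b := fun i => Module.finrank ℚ (S.X₂.homology i))
    (c := fun i => Module.finrank ℚ (S.X₃.homology i)) h0 hs (max (a + 1) b)
  rw [h₁.sum_eq_of_le (by omega), h₂.sum_eq_of_le (by omega),
    Finset.sum_range_succ (fun i => (-1 : ℤ) ^ i * Module.finrank ℚ (S.X₃.homology i)),
    hz _ le_rfl] at hsum
  have : t (max (a + 1) b) = 0 := by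
    have := ht₁ (max (a + 1) b)
    rw [h₁.finrank_eq_zero _ (by omega)] at this
    omega
  rw [this] at hsum
  push_cast at hsum
  linarith

end HasEulerChar

end EulerChar

section Subcomplexes

/-- The product of two complexes of modules. -/
@[simps]
noncomputable def prodComplex (K L : ChainComplex (ModuleCat.{0} ℚ) ℕ) :
    ChainComplex (ModuleCat.{0} ℚ) ℕ where
  X i := ModuleCat.of ℚ (K.X i × L.X i)
  d i j := ModuleCat.ofHom ((K.d i j).hom.prodMap (L.d i j).hom)
  shape i j h := by
    ext x
    · simp [K.shape i j h]
    · simp [L.shape i j h]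
    · simp [K.shape i j h]
    · simp [L.shape i j h]
  d_comp_d' i j k _ _ := by
    ext x <;> simp [← ModuleCat.comp_apply]

variable (K : ChainComplex (ModuleCat.{0} ℚ) ℕ) {P Q : ∀ i, Submodule ℚ (K.X i)}

/-- The subcomplex given by a family of submodules stable under the differential. -/
@[simps]
noncomputable def subComplex (P : ∀ i, Submodule ℚ (K.X i))
    (hP : ∀ i j, ∀ x ∈ P i, (K.d i j).hom x ∈ P j) : ChainComplex (ModuleCat.{0} ℚ) ℕ where
  X i := ModuleCat.of ℚ (P i)
  d i j := ModuleCat.ofHom ((K.d i j).hom.restrict (hP i j))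
  shape i j h := by
    ext x
    simp [K.shape i j h]
  d_comp_d' i j k _ _ := by
    ext x
    simp [← ModuleCat.comp_apply]

/-- The quotient of a complex by a subcomplex. -/
@[simps]
noncomputable def quotientComplex (P : ∀ i, Submodule ℚ (K.X i))
    (hP : ∀ i j, ∀ x ∈ P i, (K.d i j).hom x ∈ P j) : ChainComplex (ModuleCat.{0} ℚ) ℕ where
  X i := ModuleCat.of ℚ (K.X i ⧸ P i)
  d i j := ModuleCat.ofHom ((P i).mapQ (P j) (K.d i j).hom (hP i j))
  shape i j h := by
    ext x
    simp [K.shape i j h]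
  d_comp_d' i j k _ _ := by
    ext x
    simp [← ModuleCat.comp_apply]

variable {K}

lemma shortExact_of_function_exact {S : ShortComplex (ChainComplex (ModuleCat.{0} ℚ) ℕ)}
    (h₁ : ∀ i, Function.Injective (S.f.f i).hom) (h₂ : ∀ i, Function.Surjective (S.g.f i).hom)
    (h : ∀ i x, (S.g.f i).hom x = 0 → ∃ y, (S.f.f i).hom y = x) : S.ShortExact := by
  refine HomologicalComplex.shortExact_of_degreewise_shortExact _ fun i => ?_
  have : Mono (S.map (HomologicalComplex.eval _ _ i)).f :=
    (ModuleCat.mono_iff_injective _).2 (h₁ i)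
  have : Epi (S.map (HomologicalComplex.eval _ _ i)).g :=
    (ModuleCat.epi_iff_surjective _).2 (h₂ i)
  exact ⟨(ShortComplex.moduleCat_exact_iff _).2 (h i)⟩

namespace HasEulerChar

variable {a b c : ℕ} {α β γ : ℤ}

lemma prod {K L : ChainComplex (ModuleCat.{0} ℚ) ℕ} (hK : HasEulerChar K a α)
    (hL : HasEulerChar L b β) : HasEulerChar (prodComplex K L) (max a b) (α + β) := by
  let S : ShortComplex (ChainComplex (ModuleCat.{0} ℚ) ℕ) :=
    { X₁ := K
      X₂ := prodComplex K L
      X₃ := L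
      f :=
        { f := fun i => ModuleCat.ofHom (LinearMap.inl ℚ (K.X i) (L.X i))
          comm' := fun i j _ => ModuleCat.hom_ext (LinearMap.ext fun x =>
            Prod.ext rfl (map_zero (L.d i j).hom)) }
      g := { f := fun i => ModuleCat.ofHom (LinearMap.snd ℚ (K.X i) (L.X i)) } }
  refine shortExact_X₂ (S := S) (shortExact_of_function_exact (fun i => LinearMap.inl_injective)
    (fun i => LinearMap.snd_surjective) fun i x hx => ⟨x.1, Prod.ext rfl hx.symm⟩) hK hL

lemma of_subComplex {hP : ∀ i j, ∀ x ∈ P i, (K.d i j).hom x ∈ P j}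
    (h : HasEulerChar (subComplex K P hP) a α)
    (hex : ∀ i x, (K.d i ((ComplexShape.down ℕ).next i)).hom x ∈ P _ →
      ∃ e, x - (K.d (i + 1) i).hom e ∈ P i) : HasEulerChar K a α := by
  let S : ShortComplex (ChainComplex (ModuleCat.{0} ℚ) ℕ) :=
    { X₁ := subComplex K P hP
      X₂ := K
      X₃ := quotientComplex K P hP
      f := { f := fun i => ModuleCat.ofHom (P i).subtype }
      g := { f := fun i => ModuleCat.ofHom (P i).mkQ }
      zero := HomologicalComplex.hom_ext _ _ fun i => ModuleCat.hom_ext (LinearMap.ext fun x =>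
        (Submodule.Quotient.mk_eq_zero _).2 x.2) }
  have hQ : HasEulerChar (quotientComplex K P hP) 0 0 := by
    refine of_exactAt fun i => ?_
    rw [HomologicalComplex.exactAt_iff' _ (i + 1) i _ (by simp) rfl,
      ShortComplex.moduleCat_exact_iff]
    intro x hx
    obtain ⟨x, rfl⟩ := Submodule.mkQ_surjective _ x
    obtain ⟨e, he⟩ := hex i x ((Submodule.Quotient.mk_eq_zero _).1 hx)
    exact ⟨Submodule.Quotient.mk e, ((Submodule.Quotient.eq _).2 he).symm⟩
  have := shortExact_X₂ (S := S) (shortExact_of_function_exact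
    (fun i => Subtype.val_injective) (fun i => Submodule.mkQ_surjective _)
    fun i x hx => ⟨⟨x, (Submodule.Quotient.mk_eq_zero _).1 hx⟩, rfl⟩) h hQ
  simpa using this

lemma subComplex_sup {hP : ∀ i j, ∀ x ∈ P i, (K.d i j).hom x ∈ P j}
    {hQ : ∀ i j, ∀ x ∈ Q i, (K.d i j).hom x ∈ Q j}
    {hPQ : ∀ i j, ∀ x ∈ P i ⊓ Q i, (K.d i j).hom x ∈ P j ⊓ Q j}
    {hPQ' : ∀ i j, ∀ x ∈ P i ⊔ Q i, (K.d i j).hom x ∈ P j ⊔ Q j}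
    (h₁ : HasEulerChar (subComplex K P hP) a α) (h₂ : HasEulerChar (subComplex K Q hQ) b β)
    (h₃ : HasEulerChar (subComplex K (fun i => P i ⊓ Q i) hPQ) c γ) :
    HasEulerChar (subComplex K (fun i => P i ⊔ Q i) hPQ')
      (max (c + 1) (max a b)) (α + β - γ) := by
  let S : ShortComplex (ChainComplex (ModuleCat.{0} ℚ) ℕ) :=
    { X₁ := subComplex K (fun i => P i ⊓ Q i) hPQ
      X₂ := prodComplex (subComplex K P hP) (subComplex K Q hQ)
      X₃ := subComplex K (fun i => P i ⊔ Q i) hPQ'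
      f :=
        { f := fun i => ModuleCat.ofHom ((Submodule.inclusion inf_le_left).prod
            (-Submodule.inclusion inf_le_right))
          comm' := fun i j _ => ModuleCat.hom_ext (LinearMap.ext fun x =>
            Prod.ext rfl (Subtype.ext (map_neg (K.d i j).hom x.1))) }
      g :=
        { f := fun i => ModuleCat.ofHom ((Submodule.inclusion le_sup_left).coprod
            (Submodule.inclusion le_sup_right))
          comm' := fun i j _ => ModuleCat.hom_ext (LinearMap.ext fun x =>
            Subtype.ext (map_add (K.d i j).hom x.1.1 x.2.1)) }
      zero := HomologicalComplex.hom_ext _ _ fun i => ModuleCat.hom_ext (LinearMap.ext fun x =>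
        Subtype.ext (add_neg_cancel x.1)) }
  refine shortExact_X₃ (S := S) (shortExact_of_function_exact (fun i x y h => ?_)
    (fun i x => ?_) fun i x hx => ?_) h₃ (h₁.prod h₂)
  · exact Subtype.ext (congr_arg (fun z : P i × Q i => (z.1 : K.X i)) h)
  · obtain ⟨p, hp, q, hq, h⟩ := Submodule.mem_sup.1 x.2
    exact ⟨(⟨p, hp⟩, ⟨q, hq⟩), Subtype.ext h⟩
  · obtain ⟨⟨p, hp⟩, ⟨q, hq⟩⟩ := x
    have h : p + q = 0 := congr_arg Subtype.val hx
    obtain rfl := eq_neg_of_add_eq_zero_right h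
    exact ⟨⟨p, hp, by simpa using hq⟩, rfl⟩

end HasEulerChar

end Subcomplexes

section MayerVietoris

/-- The rational singular chain complex of a space. -/
noncomputable def singularComplex (X : Type) [TopologicalSpace X] :
    ChainComplex (ModuleCat.{0} ℚ) ℕ :=
  ChainComplex.of (fun n => ModuleCat.of ℚ (C(stdSimplex ℝ (Fin (n + 1)), X) →₀ ℚ))
    (fun n => ModuleCat.ofHom (singularBoundary X (n + 1)))
    fun n => ModuleCat.hom_ext (LinearMap.ext fun x => singularBoundary_comp (n + 1) x)

variable {X Y : Type} [TopologicalSpace X] [TopologicalSpace Y]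

lemma singularComplex_d (n : ℕ) :
    (singularComplex X).d (n + 1) n = ModuleCat.ofHom (singularBoundary X (n + 1)) :=
  ChainComplex.of_d (fun n => ModuleCat.of ℚ (C(stdSimplex ℝ (Fin (n + 1)), X) →₀ ℚ))
    (fun n => ModuleCat.ofHom (singularBoundary X (n + 1))) n

/-- The singular chains whose simplices lie in `U`. -/
noncomputable def chainsIn (U : Set X) (n : ℕ) :
    Submodule ℚ (C(stdSimplex ℝ (Fin n), X) →₀ ℚ) :=
  Finsupp.supported ℚ ℚ {σ | ∀ w, σ w ∈ U}

lemma chainsIn_sup (U V : Set X) (n : ℕ) : chainsIn U n ⊔ chainsIn V n = smallChains U V n :=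
  (Finsupp.supported_union _ _).symm

lemma chainsIn_inf (U V : Set X) (n : ℕ) : chainsIn U n ⊓ chainsIn V n = chainsIn (U ∩ V) n := by
  rw [chainsIn, chainsIn, ← Finsupp.supported_inter]
  congr 1
  ext σ
  exact forall_and.symm

lemma singularComplex_d_mem_smallChains (U V : Set X) (i j : ℕ) (x : (singularComplex X).X i)
    (hx : x ∈ smallChains U V (i + 1)) :
    ((singularComplex X).d i j).hom x ∈ smallChains U V (j + 1) := by
  by_cases h : j + 1 = i
  · subst h
    rw [singularComplex_d]
    exact singularBoundary_mem_smallChains _ hx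
  · rw [(singularComplex X).shape i j h]
    exact Submodule.zero_mem _

lemma singularComplex_d_mem_chainsIn (U : Set X) (i j : ℕ) (x : (singularComplex X).X i)
    (hx : x ∈ chainsIn U (i + 1)) : ((singularComplex X).d i j).hom x ∈ chainsIn U (j + 1) := by
  rw [← sup_idem (chainsIn U (j + 1)), chainsIn_sup]
  rw [← sup_idem (chainsIn U (i + 1)), chainsIn_sup] at hx
  exact singularComplex_d_mem_smallChains U U i j x hx

/-- The complex of singular chains in `U`. -/
noncomputable abbrev complexIn (U : Set X) : ChainComplex (ModuleCat.{0} ℚ) ℕ :=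
  subComplex (singularComplex X) (fun i => chainsIn U (i + 1)) (singularComplex_d_mem_chainsIn U)

lemma singularBoundary_mapDomain (f : C(X, Y)) (n : ℕ)
    (x : C(stdSimplex ℝ (Fin (n + 1)), X) →₀ ℚ) :
    singularBoundary Y n (x.mapDomain f.comp) = (singularBoundary X n x).mapDomain f.comp := by
  suffices h : singularBoundary Y n ∘ₗ Finsupp.lmapDomain ℚ ℚ f.comp =
      Finsupp.lmapDomain ℚ ℚ f.comp ∘ₗ singularBoundary X n from LinearMap.congr_fun h x
  refine Finsupp.lhom_ext' fun σ => LinearMap.ext_ring ?_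
  simp [singularBoundary, ContinuousMap.comp_assoc]

/-- An embedding identifies singular chains with the singular chains in its range. -/
noncomputable def chainsInRangeEquiv (f : C(X, Y)) (hf : Topology.IsEmbedding f) (n : ℕ) :
    (C(stdSimplex ℝ (Fin n), X) →₀ ℚ) ≃ₗ[ℚ] chainsIn (Set.range f) n :=
  LinearEquiv.ofBijective
    ((Finsupp.lmapDomain ℚ ℚ f.comp).codRestrict (chainsIn (Set.range f) n) fun x => by
      refine Finsupp.map_mem_of_mem_supported (s := Set.univ) _ (fun σ _ => ?_) (by simp)
      rw [Finsupp.lmapDomain_apply, Finsupp.mapDomain_single]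
      exact Finsupp.single_mem_supported _ _ fun w => ⟨σ w, rfl⟩) <| by
    constructor
    · refine fun x y h => Finsupp.mapDomain_injective (fun σ τ h => ?_) (congr_arg Subtype.val h)
      exact ContinuousMap.ext fun w => hf.injective (DFunLike.congr_fun h w)
    · rintro ⟨x, hx⟩
      suffices x ∈ LinearMap.range (Finsupp.lmapDomain ℚ ℚ f.comp) from
        this.imp fun y hy => Subtype.ext hy
      refine Finsupp.map_mem_of_mem_supported LinearMap.id (fun σ hσ => ?_) hx
      choose g hg using hσ
      refine ⟨Finsupp.single ⟨g, hf.continuous_iff.2 ?_⟩ 1, ?_⟩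
      · simpa only [Function.comp_def, hg] using σ.continuous
      · rw [Finsupp.lmapDomain_apply, Finsupp.mapDomain_single]
        exact congr_arg (Finsupp.single · 1) (ContinuousMap.ext hg)

/-- An embedding identifies the singular complex with the complex of chains in its range. -/
noncomputable def complexInRangeIso (f : C(X, Y)) (hf : Topology.IsEmbedding f) :
    singularComplex X ≅ complexIn (Set.range f) :=
  HomologicalComplex.Hom.isoOfComponents
    (fun i => (chainsInRangeEquiv f hf (i + 1)).toModuleIso) <| by
      rintro _ j rfl
      refine ModuleCat.hom_ext (LinearMap.ext fun x => Subtype.ext ?_)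
      change ((singularComplex Y).d (j + 1) j).hom (Finsupp.mapDomain f.comp x) =
        Finsupp.mapDomain f.comp (((singularComplex X).d (j + 1) j).hom x)
      rw [singularComplex_d, singularComplex_d]
      exact singularBoundary_mapDomain f _ x

namespace HasEulerChar

variable {a b c : ℕ} {α β γ : ℤ}

lemma singularComplex_of_complexIn_univ (h : HasEulerChar (complexIn (Set.univ : Set X)) a α) :
    HasEulerChar (singularComplex X) a α :=
  h.of_subComplex fun i x _ => ⟨0, by
    rw [map_zero, sub_zero]
    exact fun _ _ _ => Set.mem_univ _⟩

lemma of_homeomorph (h : HasEulerChar (singularComplex X) a α) (e : X ≃ₜ Y) :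
    HasEulerChar (singularComplex Y) a α := by
  have := h.of_iso (complexInRangeIso (e : C(X, Y)) e.isEmbedding)
  simp only [ContinuousMap.coe_coe, e.range_coe] at this
  exact this.singularComplex_of_complexIn_univ

lemma complexIn_of_subtype {U : Set X} (h : HasEulerChar (singularComplex U) a α) :
    HasEulerChar (complexIn U) a α := by
  have := h.of_iso (complexInRangeIso ⟨Subtype.val, continuous_subtype_val⟩
    Topology.IsEmbedding.subtypeVal)
  simpa only [ContinuousMap.coe_mk, Subtype.range_coe] using this

/-- The Mayer–Vietoris formula for Euler characteristics. -/
lemma mayerVietoris {U V : Set X} (hU : IsOpen U) (hV : IsOpen V) (hUV : U ∪ V = Set.univ)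
    (h₁ : HasEulerChar (singularComplex U) a α) (h₂ : HasEulerChar (singularComplex V) b β)
    (h₃ : HasEulerChar (singularComplex ↥(U ∩ V)) c γ) :
    HasEulerChar (singularComplex X) (max (c + 1) (max a b)) (α + β - γ) := by
  have hsup : ∀ i, (chainsIn U (i + 1) ⊔ chainsIn V (i + 1) :
      Submodule ℚ ((singularComplex X).X i)) = smallChains U V (i + 1) := fun i => chainsIn_sup _ _ _
  have h₃' := h₃.complexIn_of_subtype
  simp only [complexIn, ← chainsIn_inf] at h₃'
  refine (subComplex_sup (hPQ' := fun i j x hx => ?_)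
    h₁.complexIn_of_subtype h₂.complexIn_of_subtype h₃').of_subComplex fun i x hx => ?_
  · exact (hsup j).ge (singularComplex_d_mem_smallChains U V i j x ((hsup i).le hx))
  have hx' := (hsup _).le hx
  suffices h : ∃ e, (show C(stdSimplex ℝ (Fin (i + 1)), X) →₀ ℚ from x) -
      singularBoundary X (i + 1) e ∈ smallChains U V (i + 1) by
    obtain ⟨e, he⟩ := h
    refine ⟨e, (hsup i).ge ?_⟩
    rw [singularComplex_d]
    exact he
  refine exists_sub_singularBoundary_mem_smallChains hU hV hUV x ?_
  rcases i with _ | i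
  · refine Finsupp.map_mem_of_mem_supported (s := Set.univ) LinearMap.id (fun σ _ => ?_) (by simp)
    refine Finsupp.single_mem_supported _ _ (Or.inl fun w => ?_)
    simpa using stdSimplex.sum_eq_one w
  · rw [ChainComplex.next_nat_succ, singularComplex_d] at hx'
    exact hx'

end HasEulerChar

end MayerVietoris

section Contractible

/-- The singular chain complex as a functor. -/
noncomputable def singularChainFunctor : TopCat.{0} ⥤ ChainComplex (ModuleCat.{0} ℚ) ℕ :=
  TopCat.toSSet ⋙ (SimplicialObject.whiskering _ _).obj (ModuleCat.free ℚ) ⋙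
    AlgebraicTopology.alternatingFaceMapComplex (ModuleCat ℚ)

/-- Homotopic maps induce chain homotopic maps. -/
noncomputable def singularChainHomotopy {X Y : TopCat.{0}} {f g : X ⟶ Y}
    (H : TopCat.Homotopy f g) :
    Homotopy (singularChainFunctor.map f) (singularChainFunctor.map g) :=
  (H.toSSet.toSimplicialObjectHomotopy.whiskerRight (ModuleCat.free ℚ)).toChainHomotopy

/-- Homotopy equivalent spaces have homotopy equivalent singular complexes. -/
noncomputable def singularChainHomotopyEquiv {X Y : Type} [TopologicalSpace X]
    [TopologicalSpace Y] (e : ContinuousMap.HomotopyEquiv X Y) :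
    HomotopyEquiv (singularChainComplex ℚ (TopCat.of X)) (singularChainComplex ℚ (TopCat.of Y)) where
  hom := singularChainFunctor.map (TopCat.ofHom e.toFun)
  inv := singularChainFunctor.map (TopCat.ofHom e.invFun)
  homotopyHomInvId := (Homotopy.ofEq (singularChainFunctor.map_comp _ _).symm).trans
    ((singularChainHomotopy (f := TopCat.ofHom e.toFun ≫ TopCat.ofHom e.invFun) (g := 𝟙 _)
      e.left_inv.some).trans (Homotopy.ofEq (singularChainFunctor.map_id _)))
  homotopyInvHomId := (Homotopy.ofEq (singularChainFunctor.map_comp _ _).symm).trans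
    ((singularChainHomotopy (f := TopCat.ofHom e.invFun ≫ TopCat.ofHom e.toFun) (g := 𝟙 _)
      e.right_inv.some).trans (Homotopy.ofEq (singularChainFunctor.map_id _)))

/-- The two models of the singular chain complex agree. -/
noncomputable def singularChainComplexIso (X : Type) [TopologicalSpace X] :
    singularChainComplex ℚ (TopCat.of X) ≅ singularComplex X :=
  HomologicalComplex.Hom.isoOfComponents
    (fun i => (Finsupp.domLCongr (TopCat.toSSetObjEquiv (TopCat.of X)
      (Opposite.op (SimplexCategory.mk i)))).toModuleIso) <| by
      rintro _ j rfl
      rw [singularComplex_d]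
      refine ModuleCat.hom_ext (Finsupp.lhom_ext' fun σ => LinearMap.ext_ring ?_)
      have h := AlgebraicTopology.AlternatingFaceMapComplex.obj_d_eq
        (TopCat.toSSet.obj (TopCat.of X) ⋙ ModuleCat.free ℚ) j
      have hd : ((AlgebraicTopology.AlternatingFaceMapComplex.obj
          (TopCat.toSSet.obj (TopCat.of X) ⋙ ModuleCat.free ℚ)).d (j + 1) j).hom
            (Finsupp.single σ (1 : ℚ)) =
          (∑ i : Fin (j + 2), (-1 : ℤ) ^ (i : ℕ) •
            Finsupp.single ((TopCat.toSSet.obj (TopCat.of X)).δ i σ) (1 : ℚ) :) :=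
        (LinearMap.congr_fun ((congr_arg ModuleCat.Hom.hom h).trans (ModuleCat.hom_sum _ _))
          _).trans <| (LinearMap.sum_apply _ _ _).trans <| Finset.sum_congr rfl fun i _ =>
            congr_arg ((-1 : ℤ) ^ (i : ℕ) • ·) (Finsupp.mapDomain_single
              (f := (TopCat.toSSet.obj (TopCat.of X)).δ i) (a := σ) (b := (1 : ℚ)))
      refine Eq.trans (b := singularBoundary X (j + 1)
        (Finsupp.single (TopCat.toSSetObjEquiv (TopCat.of X) _ σ) 1))
        (congr_arg (singularBoundary X (j + 1)) (Finsupp.domLCongr_single _ _ _))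
        (Eq.trans ?_ (congr_arg (Finsupp.domLCongr (M := ℚ) (R := ℚ) (TopCat.toSSetObjEquiv (TopCat.of X)
          (Opposite.op (SimplexCategory.mk j)))) hd.symm))
      rw [map_sum, singularBoundary, LinearMap.sum_apply]
      refine Finset.sum_congr rfl fun i _ => ?_
      rw [map_zsmul, Finsupp.domLCongr_single, LinearMap.smul_apply, Finsupp.lmapDomain_apply,
        Finsupp.mapDomain_single, ← Int.cast_smul_eq_zsmul ℚ]
      push_cast
      rfl

namespace HasEulerChar

lemma singularComplex_contractible (X : Type) [TopologicalSpace X] [ContractibleSpace X] :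
    HasEulerChar (singularComplex X) 1 1 := by
  let e : singularChainComplex ℚ (TopCat.of Unit) ≅
      ChainComplex.alternatingConst.obj ((ModuleCat.free ℚ).obj Unit) :=
    (AlgebraicTopology.alternatingFaceMapComplex _).mapIso
      (((SimplicialObject.whiskering _ _).obj (ModuleCat.free ℚ)).mapIso
        (TopCat.toSSetIsoConst (TopCat.of Unit)) ≪≫ Functor.constComp _ _ _) ≪≫
      AlgebraicTopology.alternatingFaceMapComplexConst.app _
  have h : HasEulerChar (ChainComplex.alternatingConst.obj ((ModuleCat.free ℚ).obj Unit)) 1 1 := by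
    have hz : ∀ i, 1 ≤ i → Subsingleton
        ((ChainComplex.alternatingConst.obj ((ModuleCat.free ℚ).obj Unit)).homology i) := fun i hi =>
      ModuleCat.subsingleton_of_isZero
        (ChainComplex.alternatingConst_exactAt _ i (by omega)).isZero_homology
    have e0 := (ChainComplex.alternatingConstHomologyZero
      ((ModuleCat.free ℚ).obj Unit)).toLinearEquiv
    have : Module.Finite ℚ ((ModuleCat.free ℚ).obj Unit) :=
      inferInstanceAs (Module.Finite ℚ (Unit →₀ ℚ))
    have hr : Module.finrank ℚ ((ModuleCat.free ℚ).obj Unit) = 1 := by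
      change Module.finrank ℚ (Unit →₀ ℚ) = 1
      simp
    refine ⟨fun i => ?_, fun i hi => have := hz i hi; Module.finrank_zero_of_subsingleton, ?_⟩
    · rcases i with _ | i
      · exact Module.Finite.equiv e0.symm
      · have := hz (i + 1) (by omega)
        infer_instance
    · simp [e0.finrank_eq, hr]
  refine ((h.of_iso e.symm).of_homotopyEquiv (singularChainHomotopyEquiv ?_)).of_iso
    (singularChainComplexIso X)
  exact (ContractibleSpace.hequiv_unit X).some.symm

lemma singularComplex_empty (X : Type) [TopologicalSpace X] [IsEmpty X] :
    HasEulerChar (singularComplex X) 0 0 := by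
  refine of_exactAt fun i => ShortComplex.exact_of_isZero_X₂ _ ?_
  have : IsEmpty C(stdSimplex ℝ (Fin (i + 1)), X) :=
    ⟨fun σ => isEmptyElim (σ (stdSimplex.vertex 0))⟩
  have : Subsingleton ((singularComplex X).X i) :=
    inferInstanceAs (Subsingleton (C(stdSimplex ℝ (Fin (i + 1)), X) →₀ ℚ))
  exact ModuleCat.isZero_of_subsingleton ((singularComplex X).X i)

end HasEulerChar

end Contractible

section Sphere

/-- A subset of `W` viewed as a subspace of `W`. -/
def Homeomorph.preimageVal {X : Type} [TopologicalSpace X] {A W : Set X} (h : A ⊆ W) :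
    A ≃ₜ ((↑) ⁻¹' A : Set W) where
  toFun x := ⟨⟨x, h x.2⟩, x.2⟩
  invFun x := ⟨x.1.1, x.2⟩
  left_inv _ := rfl
  right_inv _ := rfl

namespace HasEulerChar

lemma union {X : Type} [TopologicalSpace X] {U V : Set X} {a b c : ℕ} {α β γ : ℤ}
    (hU : IsOpen U) (hV : IsOpen V) (h₁ : HasEulerChar (singularComplex U) a α)
    (h₂ : HasEulerChar (singularComplex V) b β)
    (h₃ : HasEulerChar (singularComplex ↥(U ∩ V)) c γ) :
    HasEulerChar (singularComplex ↥(U ∪ V)) (max (c + 1) (max a b)) (α + β - γ) := by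
  refine mayerVietoris (U := (↑) ⁻¹' U) (V := (↑) ⁻¹' V) (hU.preimage continuous_subtype_val)
    (hV.preimage continuous_subtype_val) (by ext x; exact iff_of_true x.2 trivial)
    (h₁.of_homeomorph (Homeomorph.preimageVal Set.subset_union_left))
    (h₂.of_homeomorph (Homeomorph.preimageVal Set.subset_union_right))
    (h₃.of_homeomorph (Homeomorph.preimageVal ?_))
  exact Set.inter_subset_left.trans Set.subset_union_left

lemma singularComplex_starConvex {E : Type} [AddCommGroup E] [Module ℝ E] [TopologicalSpace E]
    [ContinuousAdd E] [ContinuousSMul ℝ E] {s : Set E} {x : E} (h : StarConvex ℝ x s)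
    (hx : x ∈ s) : HasEulerChar (singularComplex s) 1 1 :=
  have := h.contractibleSpace ⟨x, hx⟩
  singularComplex_contractible s

/-- The complement of a linear subspace of codimension `#S` has the Euler characteristic of a
sphere of dimension `#S - 1`. -/
lemma singularComplex_exists_ne_zero {ι : Type} [Finite ι] [DecidableEq ι] (S : Finset ι) :
    HasEulerChar (singularComplex {x : ι → ℝ | ∃ i ∈ S, x i ≠ 0}) S.card (1 - (-1) ^ S.card) := by
  induction S using Finset.induction_on with
  | empty =>
    have : IsEmpty {x : ι → ℝ | ∃ i ∈ (∅ : Finset ι), x i ≠ 0} := ⟨fun x => by simpa using x.2⟩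
    simpa using singularComplex_empty {x : ι → ℝ | ∃ i ∈ (∅ : Finset ι), x i ≠ 0}
  | insert a S ha ih =>
    have hS : IsOpen {x : ι → ℝ | ∃ i ∈ S, x i ≠ 0} := by
      have : {x : ι → ℝ | ∃ i ∈ S, x i ≠ 0} = ⋃ i ∈ S, {x | x i ≠ 0} := by ext; simp
      rw [this]
      exact isOpen_biUnion fun i _ => isOpen_ne_fun (continuous_apply i) continuous_const
    let P (ε : ℝ) : Set (ι → ℝ) := {x | ∃ i ∈ S, x i ≠ 0} ∪ {x | 0 < ε * x a}
    have hP (ε : ℝ) : IsOpen (P ε) := hS.union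
      (isOpen_lt continuous_const (continuous_const.mul (continuous_apply a)))
    have hc (ε : ℝ) (hε : ε * ε = 1) : HasEulerChar (singularComplex (P ε)) 1 1 := by
      refine singularComplex_starConvex (x := Pi.single a ε) ?_ (Or.inr (by simp [hε]))
      intro x hx s t hs ht hst
      obtain ⟨i, hi, hxi⟩ | hxa := hx
      · obtain rfl | ht := ht.eq_or_lt
        · right
          simp_all
        · refine Or.inl ⟨i, hi, ?_⟩
          simp [ne_of_mem_of_not_mem hi ha, ht.ne', hxi]
      · right
        have : ε * (s * ε + t * x a) = s + t * (ε * x a) := by linear_combination s * hε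
        simp only [Set.mem_ofPred_eq, Pi.add_apply, Pi.smul_apply, Pi.single_eq_same, smul_eq_mul,
          this]
        obtain rfl | ht := ht.eq_or_lt
        · linarith
        · have := mul_pos ht hxa
          linarith
    have hU : P 1 ∪ P (-1) = {x : ι → ℝ | ∃ i ∈ insert a S, x i ≠ 0} := by
      ext x
      simp only [P, Set.mem_union, Set.mem_ofPred_eq, Finset.exists_mem_insert, ← lt_or_lt_iff_ne (a := x a),
        one_mul, neg_one_mul, neg_pos]
      grind
    have hI : P 1 ∩ P (-1) = {x : ι → ℝ | ∃ i ∈ S, x i ≠ 0} := by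
      ext x
      simp only [P, Set.mem_inter_iff, Set.mem_union, Set.mem_ofPred_eq, one_mul, neg_one_mul,
        neg_pos]
      have := lt_asymm (a := x a) (b := 0)
      grind
    have := union (hP 1) (hP (-1)) (hc 1 (by simp)) (hc (-1) (by simp)) (hI ▸ ih)
    rw [hU] at this
    rw [Finset.card_insert_of_notMem ha]
    convert this using 1
    · simp
    · ring

end HasEulerChar

end Sphere

section Chart

variable {k n : ℕ}

/-- The space of frames spanning the points of the Grassmannian. -/
abbrev Frame (k n : ℕ) : Type := {A : Fin k → (Fin n → ℝ) // LinearIndependent ℝ A}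

namespace Grassmannian

/-- The span of a frame. -/
def mk (A : Frame k n) : Grassmannian k n := Quotient.mk (grassSetoid k n) A

lemma isQuotientMap_mk : Topology.IsQuotientMap (mk (k := k) (n := n)) := isQuotientMap_quotient_mk'

lemma span_le_span_iff (A B : Fin k → Fin n → ℝ) :
    Submodule.span ℝ (Set.range B) ≤ Submodule.span ℝ (Set.range A) ↔
      ∃ g : Matrix (Fin k) (Fin k) ℝ, g * Matrix.of A = Matrix.of B := by
  rw [Submodule.span_le, Set.range_subset_iff]
  simp only [SetLike.mem_coe, Submodule.mem_span_range_iff_exists_fun]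
  rw [Classical.skolem]
  refine exists_congr fun g => ?_
  simp only [funext_iff, ← Matrix.ext_iff, Finset.sum_apply, Pi.smul_apply,
    smul_eq_mul, Matrix.of_apply]
  rfl

lemma mk_eq_mk {A B : Frame k n} : mk A = mk B ↔
    (∃ g : Matrix (Fin k) (Fin k) ℝ, g * Matrix.of A.1 = Matrix.of B.1) ∧
      ∃ g : Matrix (Fin k) (Fin k) ℝ, g * Matrix.of B.1 = Matrix.of A.1 := by
  rw [← span_le_span_iff, ← span_le_span_iff, and_comm, ← le_antisymm_iff]
  exact Quotient.eq

/-- The minor of a frame on the given columns. -/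
def minor (c : Fin k → Fin n) (A : Frame k n) : Matrix (Fin k) (Fin k) ℝ :=
  (Matrix.of A.1).submatrix id c

lemma minor_eq_mul {A B : Frame k n} {g : Matrix (Fin k) (Fin k) ℝ}
    (h : g * Matrix.of A.1 = Matrix.of B.1) (c : Fin k → Fin n) : minor c B = g * minor c A := by
  rw [minor, ← h]
  rfl

/-- The planes on which the coordinates indexed by `c` are independent. -/
def minorSet (c : Fin k → Fin n) : Set (Grassmannian k n) := mk '' {A | (minor c A).det ≠ 0}

lemma mk_mem_minorSet {c : Fin k → Fin n} {A : Frame k n} :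
    mk A ∈ minorSet c ↔ (minor c A).det ≠ 0 := by
  refine ⟨?_, fun h => ⟨A, h, rfl⟩⟩
  rintro ⟨B, hB, hAB⟩ hA
  obtain ⟨g, hg⟩ := (mk_eq_mk.1 hAB).2
  refine hB ?_
  rw [minor_eq_mul hg, Matrix.det_mul, hA, mul_zero]

lemma continuous_minor (c : Fin k → Fin n) : Continuous (minor c) := by
  refine continuous_matrix fun i j => ?_
  exact (continuous_apply (c j)).comp ((continuous_apply i).comp continuous_subtype_val)

lemma isOpen_minorSet (c : Fin k → Fin n) : IsOpen (minorSet c) := by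
  rw [← isQuotientMap_mk.isOpen_preimage]
  have : mk ⁻¹' minorSet c = {A : Frame k n | (minor c A).det ≠ 0} := Set.ext fun A => mk_mem_minorSet
  rw [this]
  exact isOpen_ne_fun (continuous_minor c).matrix_det continuous_const

lemma linearIndependent_of_det_ne_zero {A : Matrix (Fin k) (Fin n) ℝ} {c : Fin k → Fin n}
    (h : (A.submatrix id c).det ≠ 0) : LinearIndependent ℝ A.row :=
  LinearIndependent.of_comp (LinearMap.funLeft ℝ ℝ c)
    (Matrix.linearIndependent_rows_of_det_ne_zero h)

open Classical in
/-- The matrix with the given entries in which the columns `c` form the identity. -/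
noncomputable def chartMatrix (c : Fin k → Fin n) (x : {b // b ∉ Set.range c} × Fin k → ℝ) :
    Matrix (Fin k) (Fin n) ℝ :=
  Matrix.of fun a b => if h : b ∈ Set.range c then (if c a = b then 1 else 0) else x (⟨b, h⟩, a)

variable {c : Fin k → Fin n}

lemma chartMatrix_submatrix (hc : Function.Injective c)
    (x : {b // b ∉ Set.range c} × Fin k → ℝ) : (chartMatrix c x).submatrix id c = 1 := by
  ext a b
  simp [chartMatrix, Matrix.one_apply, hc.eq_iff]

lemma chartMatrix_eq_of_submatrix (hc : Function.Injective c)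
    {A : Matrix (Fin k) (Fin n) ℝ} (h : A.submatrix id c = 1) :
    chartMatrix c (fun p => A p.2 p.1) = A := by
  ext a b
  by_cases hb : b ∈ Set.range c
  · obtain ⟨i, rfl⟩ := hb
    have := congr_fun₂ h a
    simp_all [chartMatrix, Matrix.one_apply, hc.eq_iff]
  · simp only [chartMatrix, Matrix.of_apply, hb, dite_false]

/-- The affine chart of the Grassmannian given by the columns `c`. -/
noncomputable def chart (hc : Function.Injective c) (x : {b // b ∉ Set.range c} × Fin k → ℝ) :
    Grassmannian k n :=
  mk ⟨chartMatrix c x, linearIndependent_of_det_ne_zero (c := c) <|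
    (chartMatrix_submatrix hc x).symm ▸ by simp⟩

lemma continuous_chart (hc : Function.Injective c) : Continuous (chart hc) := by
  refine isQuotientMap_mk.continuous.comp (Continuous.subtype_mk ?_ _)
  refine continuous_pi fun a => continuous_pi fun b => ?_
  by_cases h : b ∈ Set.range c
  · simp only [chartMatrix, Matrix.of_apply, h, dite_true]
    exact continuous_const
  · simp only [chartMatrix, Matrix.of_apply, h, dite_false]
    exact continuous_apply _

lemma chart_eq_mk_iff (hc : Function.Injective c) (x : {b // b ∉ Set.range c} × Fin k → ℝ)
    (A : Frame k n) : chart hc x = mk A ↔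
      (minor c A).det ≠ 0 ∧ (fun p => ((minor c A)⁻¹ * Matrix.of A.1) p.2 p.1) = x := by
  rw [chart, mk_eq_mk]
  constructor
  · rintro ⟨-, g, hg⟩
    have hc' : g * minor c A = 1 := (minor_eq_mul hg c).symm.trans (chartMatrix_submatrix hc x)
    refine ⟨fun h => ?_, ?_⟩
    · simpa [h] using congr_arg Matrix.det hc'
    · rw [Matrix.inv_eq_left_inv hc', hg]
      exact funext fun p => dif_neg p.1.2
  · rintro ⟨h, rfl⟩
    have hc' : chartMatrix c (fun p => ((minor c A)⁻¹ * Matrix.of A.1) p.2 p.1) =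
        (minor c A)⁻¹ * Matrix.of A.1 :=
      chartMatrix_eq_of_submatrix hc (Matrix.nonsing_inv_mul _ (isUnit_iff_ne_zero.2 h))
    refine ⟨⟨minor c A, ?_⟩, (minor c A)⁻¹, hc'.symm⟩
    refine (congr_arg (minor c A * ·) hc').trans ?_
    exact Matrix.mul_nonsing_inv_cancel_left _ _ (isUnit_iff_ne_zero.2 h)

lemma isOpenEmbedding_chart (hc : Function.Injective c) : Topology.IsOpenEmbedding (chart hc) := by
  refine .of_continuous_injective_isOpenMap (continuous_chart hc) (fun x y hxy => ?_) fun O hO => ?_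
  · exact ((chart_eq_mk_iff hc x _).1 rfl).2.symm.trans ((chart_eq_mk_iff hc y _).1 hxy.symm).2
  · rw [← isQuotientMap_mk.isOpen_preimage]
    have : mk ⁻¹' (chart hc '' O) = {A : Frame k n | (minor c A).det ≠ 0} ∩
        (fun A p => ((minor c A)⁻¹ * Matrix.of A.1) p.2 p.1) ⁻¹' O := by
      ext A
      simp [chart_eq_mk_iff, and_comm]
    rw [this]
    refine ContinuousOn.isOpen_inter_preimage ?_ ?_ hO
    · simp only [Matrix.inv_def, Ring.inverse_eq_inv', Matrix.smul_mul]
      have hA : Continuous fun A : Frame k n => Matrix.of A.1 := continuous_subtype_val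
      refine continuousOn_pi.2 fun p => ContinuousOn.mul ?_ ?_
      · exact (continuous_minor c).matrix_det.continuousOn.inv₀ fun A hA => hA
      · exact (((continuous_minor c).matrix_adjugate.matrix_mul hA).matrix_elem _ _).continuousOn
    · exact isOpen_ne_fun (continuous_minor c).matrix_det continuous_const

lemma range_chart (hc : Function.Injective c) : Set.range (chart hc) = minorSet c := by
  ext p
  obtain ⟨A, rfl⟩ := isQuotientMap_mk.surjective p
  simp [mk_mem_minorSet, chart_eq_mk_iff]

end Grassmannian

end Chart

section Filtration

variable {k n : ℕ}

namespace Grassmannian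

/-- The binary number with digits at the positions `c`. -/
def weight (c : Fin k → Fin n) : ℕ := ∑ a, 2 ^ (c a : ℕ)

/-- The planes with a nonzero minor of weight less than `w`. -/
def weightSet (k n w : ℕ) : Set (Grassmannian k n) :=
  ⋃ c : {c : Fin k → Fin n // weight c < w}, minorSet c.1

lemma isOpen_weightSet (k n w : ℕ) : IsOpen (weightSet k n w) :=
  isOpen_iUnion fun c => isOpen_minorSet c.1

lemma mk_mem_weightSet {w : ℕ} {A : Frame k n} :
    mk A ∈ weightSet k n w ↔ ∃ c, weight c < w ∧ (minor c A).det ≠ 0 := by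
  simp [weightSet, mk_mem_minorSet]

lemma injective_of_mem_minorSet {c : Fin k → Fin n} {p : Grassmannian k n}
    (hp : p ∈ minorSet c) : Function.Injective c := by
  obtain ⟨A, hA, rfl⟩ := hp
  intro i j hij
  by_contra hne
  exact hA (Matrix.det_zero_of_column_eq hne fun a => by simp [minor, hij])

lemma minorSet_comp (c : Fin k → Fin n) (σ : Equiv.Perm (Fin k)) :
    minorSet (c ∘ σ) = minorSet c := by
  ext p
  obtain ⟨A, rfl⟩ := isQuotientMap_mk.surjective p
  have : minor (c ∘ σ) A = (minor c A).submatrix id σ := rfl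
  simp [mk_mem_minorSet, Matrix.det_permute', this]

/-- The set of columns of `c` as natural numbers. -/
def columns (c : Fin k → Fin n) : Finset ℕ := Finset.univ.image fun a => (c a : ℕ)

lemma weight_eq_sum {c : Fin k → Fin n} (hc : Function.Injective c) :
    weight c = ∑ i ∈ columns c, 2 ^ i := by
  rw [columns, Finset.sum_image fun i _ j _ h => hc (Fin.ext h), weight]

lemma minorSet_eq_of_weight_eq {c d : Fin k → Fin n} (hc : Function.Injective c)
    (hd : Function.Injective d) (h : weight c = weight d) : minorSet c = minorSet d := by
  rw [weight_eq_sum hc, weight_eq_sum hd] at h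
  have hcol : columns c = columns d := Finset.geomSum_injective le_rfl h
  have hr : Set.range c = Set.range d := by
    ext b
    simpa [columns, Fin.val_inj] using Finset.ext_iff.1 hcol b
  let σ : Equiv.Perm (Fin k) :=
    (Equiv.ofInjective c hc).trans ((Equiv.setCongr hr).trans (Equiv.ofInjective d hd).symm)
  have : c = d ∘ σ := funext fun i => (congr_arg Subtype.val
    ((Equiv.ofInjective d hd).apply_symm_apply ((Equiv.setCongr hr) (Equiv.ofInjective c hc i)))).symm
  rw [this, minorSet_comp]

open Classical in
/-- The entries of a chart matrix which vanish on the Schubert cell of `c`. -/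
noncomputable def leftEntries (c : Fin k → Fin n) :
    Finset ({b // b ∉ Set.range c} × Fin k) :=
  {p | p.1.1 < c p.2}

lemma chart_mem_weightSet_iff {c : Fin k → Fin n} (hc : Function.Injective c)
    (x : {b // b ∉ Set.range c} × Fin k → ℝ) :
    chart hc x ∈ weightSet k n (weight c) ↔ ∃ p ∈ leftEntries c, x p ≠ 0 := by
  rw [chart, mk_mem_weightSet]
  simp only [minor, leftEntries, Finset.mem_filter_univ]
  constructor
  · rintro ⟨d, hd, h⟩
    by_contra! hx
    rw [Matrix.det_apply] at h
    obtain ⟨σ, -, hσ⟩ := Finset.exists_ne_zero_of_sum_ne_zero h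
    refine hd.not_ge ?_
    rw [weight, ← Equiv.sum_comp σ]
    refine Finset.sum_le_sum fun a _ => Nat.pow_le_pow_right two_pos ?_
    have ha : chartMatrix c x (σ a) (d a) ≠ 0 := by
      intro h0
      refine hσ (smul_eq_zero_of_right _ (Finset.prod_eq_zero (Finset.mem_univ a) h0))
    by_contra! hlt
    have hd' : d a ∉ Set.range c := by
      rintro ⟨j, hj⟩
      have : c (σ a) = d a := by
        by_contra hne
        exact ha (by simpa [chartMatrix, ← hj] using hne)
      exact hlt.ne' (congr_arg Fin.val this)
    refine ha ((dif_neg hd').trans (hx (⟨d a, hd'⟩, σ a) hlt))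
  · rintro ⟨⟨⟨b, hb⟩, a⟩, hba, hx⟩
    refine ⟨Function.update c a b, ?_, ?_⟩
    · refine Finset.sum_lt_sum (fun i _ => ?_) ⟨a, Finset.mem_univ a, ?_⟩
      · obtain rfl | hi := eq_or_ne i a
        · rw [Function.update_self]
          exact Nat.pow_le_pow_right two_pos hba.le
        · simp [hi]
      · rw [Function.update_self]
        exact Nat.pow_lt_pow_right one_lt_two hba
    · have : (chartMatrix c x).submatrix id (Function.update c a b) =
          Matrix.updateCol 1 a (fun i => chartMatrix c x i b) := by
        ext i j
        obtain rfl | hj := eq_or_ne j a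
        · simp
        · rw [← chartMatrix_submatrix hc x]
          simp [hj]
      change ((chartMatrix c x).submatrix id (Function.update c a b)).det ≠ 0
      rw [this, ← Matrix.cramer_apply, Matrix.cramer_one]
      exact fun h => hx ((dif_neg hb).symm.trans h)

lemma exists_minor_ne_zero (A : Frame k n) : ∃ c, (minor c A).det ≠ 0 := by
  obtain ⟨f, hf, -, hli⟩ :=
    Submodule.exists_fun_fin_finrank_span_eq ℝ (Set.range (Matrix.of A.1).col)
  choose c hc using hf
  have hr : k = Module.finrank ℝ (Submodule.span ℝ (Set.range (Matrix.of A.1).col)) := by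
    rw [← Matrix.rank_eq_finrank_span_cols, LinearIndependent.rank_matrix (M := Matrix.of A.1) A.2,
      Fintype.card_fin]
  refine ⟨c ∘ Fin.cast hr, isUnit_iff_ne_zero.1 ((Matrix.isUnit_iff_isUnit_det _).1
    (Matrix.linearIndependent_cols_iff_isUnit.1 ?_))⟩
  have : (minor (c ∘ Fin.cast hr) A).col = f ∘ Fin.cast hr := funext fun i => hc _
  rw [this]
  exact hli.comp _ (Fin.cast_injective hr)

lemma weightSet_eq_univ : weightSet k n (k * 2 ^ n + 1) = Set.univ := by
  refine Set.eq_univ_of_forall fun p => ?_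
  obtain ⟨A, rfl⟩ := isQuotientMap_mk.surjective p
  obtain ⟨c, hc⟩ := exists_minor_ne_zero A
  refine mk_mem_weightSet.2 ⟨c, Nat.lt_succ_of_le ?_, hc⟩
  refine (Finset.sum_le_card_nsmul _ _ (2 ^ n) fun i _ => ?_).trans (by simp)
  exact Nat.pow_le_pow_right two_pos (c i).2.le

end Grassmannian

end Filtration

section Inversions

/-- The number of pairs `b < a` of natural numbers with `a ∈ I` and `b ∉ I`. -/
def inversions (I : Finset ℕ) : ℕ := ∑ a ∈ I, (Finset.range a \ I).card

lemma inversions_insert {n : ℕ} {I : Finset ℕ} (hI : I ⊆ Finset.range n) :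
    inversions (insert n I) = (n - I.card) + inversions I := by
  have hn : n ∉ I := fun h => by simpa using hI h
  rw [inversions, Finset.sum_insert hn]
  congr 1
  · rw [Finset.sdiff_insert_of_notMem (by simp), Finset.card_sdiff_of_subset hI, Finset.card_range]
  · refine Finset.sum_congr rfl fun a ha => ?_
    rw [Finset.sdiff_insert_of_notMem]
    simpa using (Finset.mem_range.1 (hI ha)).le

lemma inversions_le {n k : ℕ} {I : Finset ℕ} (hI : I ∈ Finset.powersetCard k (Finset.range n)) :
    inversions I ≤ k * (n - k) := by
  obtain ⟨hsub, rfl⟩ := Finset.mem_powersetCard.1 hI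
  refine (Finset.sum_le_card_nsmul _ _ (n - I.card) fun a ha => ?_).trans (by simp)
  calc (Finset.range a \ I).card ≤ (Finset.range n \ I).card :=
        Finset.card_le_card (Finset.sdiff_subset_sdiff
          (Finset.range_mono (Finset.mem_range.1 (hsub ha)).le) le_rfl)
    _ = n - I.card := by rw [Finset.card_sdiff_of_subset hsub, Finset.card_range]

/-- The Gaussian binomial coefficient at `-1`, as a signed count of subsets. -/
lemma sum_neg_one_pow_inversions (n k : ℕ) :
    ∑ I ∈ Finset.powersetCard k (Finset.range n), (-1 : ℤ) ^ inversions I =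
      if k % 2 = 1 ∧ n % 2 = 0 then 0 else ((n / 2).choose (k / 2) : ℤ) := by
  induction n generalizing k with
  | zero =>
    rcases k with _ | k
    · simp [inversions]
    · rw [Finset.powersetCard_eq_empty.2 (by simp), Finset.sum_empty]
      split_ifs with h
      · rfl
      · rw [Nat.choose_eq_zero_of_lt (by omega), Nat.cast_zero]
  | succ n ih =>
    rcases k with _ | k
    · simp [inversions]
    · have hstep : ∑ I ∈ Finset.powersetCard (k + 1) (Finset.range (n + 1)), (-1 : ℤ) ^ inversions I =
          ∑ I ∈ Finset.powersetCard (k + 1) (Finset.range n), (-1 : ℤ) ^ inversions I +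
          (-1) ^ (n + k) * ∑ I ∈ Finset.powersetCard k (Finset.range n), (-1 : ℤ) ^ inversions I := by
        rw [Finset.range_add_one, Finset.powersetCard_succ_insert (by simp), Finset.sum_union,
          Finset.sum_image, Finset.mul_sum]
        · congr 1
          refine Finset.sum_congr rfl fun I hI => ?_
          obtain ⟨hsub, rfl⟩ := Finset.mem_powersetCard.1 hI
          have hle := Finset.card_le_card hsub
          rw [Finset.card_range] at hle
          rw [inversions_insert hsub, pow_add]
          congr 1
          rw [show n + I.card = (n - I.card) + 2 * I.card by omega, pow_add, pow_mul]
          simp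
        · intro I hI J hJ hIJ
          have h (K : Finset ℕ) (hK : K ∈ Finset.powersetCard k (Finset.range n)) : n ∉ K :=
            fun h => by simpa using (Finset.mem_powersetCard.1 hK).1 h
          rw [← Finset.erase_insert (h I hI), hIJ, Finset.erase_insert (h J hJ)]
        · rw [Finset.disjoint_left]
          intro I hI hI'
          obtain ⟨J, -, rfl⟩ := Finset.mem_image.1 hI'
          simpa using (Finset.mem_powersetCard.1 hI).1 (Finset.mem_insert_self n J)
      rw [hstep, ih, ih]
      obtain ⟨m, rfl | rfl⟩ := Nat.even_or_odd' n <;> obtain ⟨j, rfl | rfl⟩ := Nat.even_or_odd' k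
      · rw [if_pos (by omega), if_neg (by omega), if_neg (by omega),
          show (2 * m + 1) / 2 = m by omega, show (2 * j + 1) / 2 = j by omega,
          show 2 * m / 2 = m by omega, show 2 * j / 2 = j by omega,
          show 2 * m + 2 * j = 2 * (m + j) by ring, pow_mul]
        simp
      · rw [if_neg (by omega), if_pos (by omega), if_neg (by omega),
          show (2 * m + 1) / 2 = m by omega, show (2 * j + 1 + 1) / 2 = j + 1 by omega,
          show 2 * m / 2 = m by omega]
        simp
      · rw [if_neg (by omega), if_neg (by omega), if_pos (by omega),
          show (2 * j + 1) / 2 = j by omega, show 2 * j / 2 = j by omega,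
          show 2 * m + 1 + 2 * j = 2 * (m + j) + 1 by ring, pow_succ, pow_mul]
        simp
      · rw [if_neg (by omega), if_neg (by omega), if_neg (by omega),
          show (2 * m + 1 + 1) / 2 = m + 1 by omega, show (2 * m + 1) / 2 = m by omega,
          show (2 * j + 1 + 1) / 2 = j + 1 by omega, show (2 * j + 1) / 2 = j by omega,
          show 2 * m + 1 + (2 * j + 1) = 2 * (m + j + 1) by ring, pow_mul, Nat.choose_succ_succ]
        simp [add_comm]

end Inversions

section EulerCharacteristic

variable {k n : ℕ}

namespace Grassmannian

lemma columns_mem {c : Fin k → Fin n} (hc : Function.Injective c) :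
    columns c ∈ Finset.powersetCard k (Finset.range n) := by
  refine Finset.mem_powersetCard.2 ⟨fun b hb => ?_, ?_⟩
  · obtain ⟨a, -, rfl⟩ := Finset.mem_image.1 hb
    simp
  · rw [columns, Finset.card_image_of_injective _ fun i j h => hc (Fin.ext h), Finset.card_fin]

lemma exists_columns_eq {I : Finset ℕ} (hI : I ∈ Finset.powersetCard k (Finset.range n)) :
    ∃ c : Fin k → Fin n, Function.Injective c ∧ columns c = I := by
  obtain ⟨hsub, hcard⟩ := Finset.mem_powersetCard.1 hI
  refine ⟨fun a => ⟨I.orderEmbOfFin hcard a,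
    Finset.mem_range.1 (hsub (Finset.orderEmbOfFin_mem I hcard a))⟩, fun a b hab => ?_, ?_⟩
  · exact (I.orderEmbOfFin hcard).injective (congr_arg Fin.val hab)
  · exact Finset.image_orderEmbOfFin_univ I hcard

lemma card_leftEntries {c : Fin k → Fin n} (hc : Function.Injective c) :
    (leftEntries c).card = inversions (columns c) := by
  rw [inversions, ← Finset.card_sigma]
  refine Finset.card_nbij (fun p => ⟨(c p.2 : ℕ), (p.1.1 : ℕ)⟩) (fun p hp => ?_)
    (fun p _ q _ h => ?_) fun q hq => ?_
  · have := p.1.2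
    simp_all [leftEntries, columns, Fin.val_inj]
  · simp only [Sigma.mk.injEq, heq_eq_eq, Fin.val_inj, hc.eq_iff] at h
    exact Prod.ext (Subtype.ext h.2) h.1
  · obtain ⟨a, b⟩ := q
    simp only [columns, Finset.coe_sigma, Set.mem_sigma_iff, Finset.mem_coe, Finset.mem_image,
      Finset.mem_univ, true_and, Finset.mem_sdiff, Finset.mem_range, not_exists] at hq
    obtain ⟨⟨i, rfl⟩, hlt, hne⟩ := hq
    refine ⟨(⟨⟨b, hlt.trans (c i).2⟩, ?_⟩, i), ?_, rfl⟩
    · rintro ⟨j, hj⟩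
      exact hne j (congr_arg Fin.val hj)
    · exact Finset.mem_coe.2 ((Finset.mem_filter_univ _).2 hlt)

lemma hasEulerChar_weightSet_inter {c : Fin k → Fin n} (hc : Function.Injective c) :
    HasEulerChar (singularComplex ↥(weightSet k n (weight c) ∩ minorSet c))
      (inversions (columns c)) (1 - (-1) ^ inversions (columns c)) := by
  classical
  rw [← card_leftEntries hc]
  refine (HasEulerChar.singularComplex_exists_ne_zero (leftEntries c)).of_homeomorph ?_
  refine Homeomorph.trans (Homeomorph.setCongr (Set.ext fun x => ?_))
    ((isOpenEmbedding_chart hc).isEmbedding.homeomorphOfSubsetRange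
      (Set.inter_subset_right.trans (range_chart hc).ge))
  refine (chart_mem_weightSet_iff hc x).symm.trans (iff_self_and.2 fun _ => ?_)
  rw [← range_chart hc]
  exact ⟨x, rfl⟩

lemma hasEulerChar_minorSet {c : Fin k → Fin n} (hc : Function.Injective c) :
    HasEulerChar (singularComplex (minorSet c)) 1 1 := by
  refine (HasEulerChar.singularComplex_contractible _).of_homeomorph
    ((isOpenEmbedding_chart hc).isEmbedding.toHomeomorph.trans (.setCongr (range_chart hc)))

lemma weightSet_succ {c : Fin k → Fin n} (hc : Function.Injective c) :
    weightSet k n (weight c + 1) = weightSet k n (weight c) ∪ minorSet c := by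
  ext p
  simp only [weightSet, Set.mem_iUnion, Subtype.exists, Set.mem_union, Nat.lt_succ_iff,
    exists_prop]
  constructor
  · rintro ⟨d, hd, hp⟩
    obtain hd | hd := hd.lt_or_eq
    · exact Or.inl ⟨d, hd, hp⟩
    · exact Or.inr (minorSet_eq_of_weight_eq (injective_of_mem_minorSet hp) hc hd ▸ hp)
  · rintro (⟨d, hd, hp⟩ | hp)
    · exact ⟨d, hd.le, hp⟩
    · exact ⟨c, le_rfl, hp⟩

lemma hasEulerChar_weightSet (k n w : ℕ) :
    HasEulerChar (singularComplex (weightSet k n w)) (k * (n - k) + 1)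
      (∑ I ∈ Finset.powersetCard k (Finset.range n) with ∑ i ∈ I, 2 ^ i < w,
        (-1) ^ inversions I) := by
  induction w with
  | zero =>
    have : IsEmpty (weightSet k n 0) := ⟨fun p => by simpa [weightSet] using p.2⟩
    simpa using (HasEulerChar.singularComplex_empty (weightSet k n 0)).mono (Nat.zero_le _)
  | succ w ih =>
    by_cases h : ∃ c : Fin k → Fin n, Function.Injective c ∧ weight c = w
    · obtain ⟨c, hc, rfl⟩ := h
      have hfilter : {I ∈ Finset.powersetCard k (Finset.range n) | ∑ i ∈ I, 2 ^ i < weight c + 1} =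
          insert (columns c)
            {I ∈ Finset.powersetCard k (Finset.range n) | ∑ i ∈ I, 2 ^ i < weight c} := by
        ext I
        have hI : ∑ i ∈ I, 2 ^ i = weight c ↔ I = columns c := by
          rw [weight_eq_sum hc]
          exact (Finset.geomSum_injective le_rfl).eq_iff
        have := columns_mem hc
        simp only [Finset.mem_filter, Finset.mem_insert, Nat.lt_succ_iff_lt_or_eq, hI]
        grind
      have hmem : columns c ∉
          {I ∈ Finset.powersetCard k (Finset.range n) | ∑ i ∈ I, 2 ^ i < weight c} := by
        simp [weight_eq_sum hc]
      rw [weightSet_succ hc, hfilter, Finset.sum_insert hmem]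
      have := (ih.union (isOpen_weightSet k n _) (isOpen_minorSet c) (hasEulerChar_minorSet hc)
        (hasEulerChar_weightSet_inter hc)).mono (D' := k * (n - k) + 1) ?_
      · convert this using 1
        ring
      · have := inversions_le (columns_mem hc)
        omega
    · have hset : weightSet k n (w + 1) = weightSet k n w := by
        ext p
        simp only [weightSet, Set.mem_iUnion, Subtype.exists, exists_prop, Nat.lt_succ_iff_lt_or_eq]
        refine exists_congr fun c => and_congr_left fun hp => or_iff_left fun hw => h ?_
        exact ⟨c, injective_of_mem_minorSet hp, hw⟩
      rw [hset]
      convert ih using 2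
      refine Finset.filter_congr fun I hI => ?_
      rw [Nat.lt_succ_iff_lt_or_eq, or_iff_left]
      rintro rfl
      obtain ⟨c, hc, rfl⟩ := exists_columns_eq hI
      exact h ⟨c, hc, weight_eq_sum hc⟩

lemma hasEulerChar (k n : ℕ) :
    HasEulerChar (singularComplex (Grassmannian k n)) (k * (n - k) + 1)
      (if k % 2 = 1 ∧ n % 2 = 0 then 0 else ((n / 2).choose (k / 2) : ℤ)) := by
  have h := hasEulerChar_weightSet k n (k * 2 ^ n + 1)
  rw [Finset.filter_true_of_mem, sum_neg_one_pow_inversions] at h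
  · exact h.of_homeomorph ((Homeomorph.setCongr weightSet_eq_univ).trans (Homeomorph.Set.univ _))
  · intro I hI
    obtain ⟨hsub, rfl⟩ := Finset.mem_powersetCard.1 hI
    refine Nat.lt_succ_of_le (Finset.sum_le_card_nsmul _ _ (2 ^ n) fun i hi => ?_)
    exact Nat.pow_le_pow_right two_pos (Finset.mem_range.1 (hsub hi)).le

end Grassmannian

end EulerCharacteristic

section DualExact

open Opposite

lemma exact_map_linearYoneda {S : ShortComplex (ModuleCat.{0} ℚ)ᵒᵖ} (hS : S.Exact) :
    (S.map ((linearYoneda ℚ (ModuleCat.{0} ℚ)).obj (ModuleCat.of ℚ ℚ))).Exact := by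
  rw [ShortComplex.moduleCat_exact_iff]
  intro (x : S.X₂.unop ⟶ ModuleCat.of ℚ ℚ) (hx : S.g.unop ≫ x = 0)
  have hker : x.hom ∈ (LinearMap.ker S.f.unop.hom).dualAnnihilator := by
    refine (Submodule.mem_dualAnnihilator _).2 fun z hz => ?_
    obtain ⟨w, rfl⟩ := (ShortComplex.moduleCat_exact_iff _).1 hS.unop z hz
    exact LinearMap.congr_fun (congr_arg ModuleCat.Hom.hom hx) w
  rw [← LinearMap.range_dualMap_eq_dualAnnihilator_ker] at hker
  obtain ⟨y, hy⟩ := hker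
  exact ⟨ModuleCat.ofHom y, ModuleCat.hom_ext hy⟩

lemma finrank_homology_map_linearYoneda_op (K : ChainComplex (ModuleCat.{0} ℚ) ℕ) (i : ℕ) :
    Module.finrank ℚ (((((linearYoneda ℚ (ModuleCat ℚ)).obj
      (ModuleCat.of ℚ ℚ)).mapHomologicalComplex _).obj K.op).homology i) =
      Module.finrank ℚ (K.homology i) := by
  let F := (linearYoneda ℚ (ModuleCat.{0} ℚ)).obj (ModuleCat.of ℚ ℚ)
  obtain ⟨_, _⟩ := (F.exact_tfae.out 1 3).1 fun S hS => exact_map_linearYoneda hS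
  let e : ((F.mapHomologicalComplex _).obj K.op).homology i ≅ F.obj (op (K.homology i)) :=
    (K.op.sc i).mapHomologyIso F ≪≫ F.mapIso (K.homologyOp i)
  rw [e.toLinearEquiv.finrank_eq]
  exact ModuleCat.homLinearEquiv.finrank_eq.trans Subspace.dual_finrank_eq

lemma finrank_singularCohomology (X : TopCat) (i : ℕ) :
    Module.finrank ℚ (singularCohomology ℚ X i) =
      Module.finrank ℚ ((singularChainComplex ℚ X).homology i) :=
  finrank_homology_map_linearYoneda_op _ _

end DualExact

/-- The Euler characteristic of the real Grassmannian `Gr(k, n)` (the alternating sum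
of its rational Betti numbers; the cohomology vanishes above the dimension `k(n-k)`)
equals `C(⌊n/2⌋, ⌊k/2⌋)` when `(k, n)` is of the form `(2j, 2m)`, `(2j, 2m+1)` or
`(2j+1, 2m+1)`, and equals `0` when `(k, n) = (2j+1, 2m)`. -/
theorem eulerChar_grassmannian (k n : ℕ) (hkn : k ≤ n) :
    (∀ i : ℕ, k * (n - k) < i →
      Module.finrank ℚ (singularCohomology ℚ (TopCat.of (Grassmannian k n)) i) = 0) ∧
    (∑ i ∈ Finset.range (k * (n - k) + 1), (-1 : ℤ) ^ i *
        (Module.finrank ℚ (singularCohomology ℚ (TopCat.of (Grassmannian k n)) i) : ℤ))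
      = if k % 2 = 1 ∧ n % 2 = 0 then 0 else ((n / 2).choose (k / 2) : ℤ) := by
  have h := (Grassmannian.hasEulerChar k n).of_iso (singularChainComplexIso _).symm
  simp only [finrank_singularCohomology]
  exact ⟨h.finrank_eq_zero, h.sum_eq⟩
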